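/- arXiv:1806.10737 — 3 statements merged into one kernel-verified Lean document; each statement's English description precedes it below -/
import Mathlib

section
/- For every real number α that is algebraic over ℚ and every ε > 0, the set of rational numbers ξ satisfying min{1, |α − ξ|} ≤ H(ξ)^{−(2+ε)} is finite. (Theorem 0.1, Roth's theorem, in the case k = ℚ with S consisting of the archimedean place.) -/
/-- The multiplicative height of a rational number `ξ = p/q` in lowest terms
(`q > 0`): `H(ξ) = max {|p|, q}`. -/
def ratHeight (ξ : ℚ) : ℕ := max ξ.num.natAbs ξ.den

/-! For integers `r₁, …, rₙ` whose successive ratios are large, Siegel's lemma provides a nonzero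
integer polynomial `P` of partial degrees at most `r`, with small coefficients, whose index at
`(α, …, α)` is nearly `n / 2`: by the law of large numbers only a small proportion of the monomials
have weight much below `n / 2`, so there are few linear conditions. Suppose that `ξ₁, …, ξₙ` are
very good approximations of `α` and that the numbers `rₕ log (den ξₕ)` are nearly equal. By Taylor
expansion at `(α, …, α)`, a Taylor coefficient of `P` of small weight at `(ξ₁, …, ξₙ)` is then less
than the reciprocal of its denominator, hence zero, so the index of `P` at `(ξ₁, …, ξₙ)` is bounded
below independently of `r`. Roth's lemma says that this is impossible: it is proved by induction on
`n`, factoring a generalized Wronskian of `P` into a polynomial in the first variable, which Gauss's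
lemma bounds in terms of the denominator of the first coordinate, and one in the others. -/

namespace Roth

open MvPolynomial Finset

noncomputable section

/-! ### Taylor expansion and Hasse derivatives -/

section Taylor

variable {σ R A : Type*} [CommRing R] [CommRing A] [Algebra R A]

/-- The Taylor expansion `f(X + a)` of `f` at the point `a`, whose coordinates may lie in an
extension `A` of the coefficient ring. -/
def taylorAt (a : σ → A) : MvPolynomial σ R →ₐ[R] MvPolynomial σ A :=
  aeval fun i => X i + C (a i)

@[simp]
lemma taylorAt_X (a : σ → A) (i : σ) : taylorAt a (X i : MvPolynomial σ R) = X i + C (a i) :=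
  aeval_X _ _

lemma taylorAt_add (a b : σ → A) (f : MvPolynomial σ R) :
    taylorAt (a + b) f = taylorAt b (taylorAt a f) := by
  suffices taylorAt (R := R) (a + b) = ((taylorAt (R := A) b).restrictScalars R).comp (taylorAt a)
    from DFunLike.congr_fun this f
  refine algHom_ext fun i => ?_
  simp only [taylorAt_X, Pi.add_apply, AlgHom.comp_apply, AlgHom.restrictScalars_apply,
    map_add, algHom_C, algebraMap_eq]
  ring

lemma taylorAt_zero (f : MvPolynomial σ R) : taylorAt (0 : σ → R) f = f := by
  suffices taylorAt (0 : σ → R) = AlgHom.id R (MvPolynomial σ R) from DFunLike.congr_fun this f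
  exact algHom_ext fun i => by simp

lemma taylorAt_map_algebraMap (a : σ → A) (f : MvPolynomial σ R) :
    taylorAt a (map (algebraMap R A) f) = taylorAt a f :=
  aeval_map_algebraMap A _ f

lemma map_taylorAt {B : Type*} [CommRing B] [Algebra R B] (g : A →ₐ[R] B) (a : σ → A)
    (f : MvPolynomial σ R) : mapAlgHom g (taylorAt a f) = taylorAt (g ∘ a) f := by
  suffices ((mapAlgHom g).comp (taylorAt a) : MvPolynomial σ R →ₐ[R] _) = taylorAt (g ∘ a)
    from DFunLike.congr_fun this f
  exact algHom_ext fun i => by simp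

lemma taylorAt_injective (a : σ → R) : Function.Injective (taylorAt (R := R) a) :=
  Function.LeftInverse.injective (g := taylorAt (-a)) fun f => by
    rw [← taylorAt_add, add_neg_cancel, taylorAt_zero]

/-- The Hasse derivative `(∏ᵢ μᵢ!)⁻¹ ∂^μ`, encoded as a coefficient of the expansion of
`f(X + Y)` in powers of `X`, so that it makes sense over every commutative ring. -/
def hasseDeriv (μ : σ →₀ ℕ) : MvPolynomial σ R →ₗ[R] MvPolynomial σ R :=
  (lcoeff _ μ).restrictScalars R ∘ₗ (taylorAt (A := MvPolynomial σ R) X).toLinearMap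

lemma hasseDeriv_apply (μ : σ →₀ ℕ) (f : MvPolynomial σ R) :
    hasseDeriv μ f = coeff μ (taylorAt (A := MvPolynomial σ R) X f) := rfl

lemma hasseDeriv_taylorAt (a : σ → A) (μ : σ →₀ ℕ) (f : MvPolynomial σ R) :
    hasseDeriv μ (taylorAt a f) = taylorAt a (hasseDeriv μ f) := by
  have h : ((taylorAt (R := A) (A := MvPolynomial σ A) X).restrictScalars R).comp (taylorAt a) =
      (mapAlgHom (taylorAt a)).comp (taylorAt (R := R) (A := MvPolynomial σ R) X) := by
    refine algHom_ext fun i => ?_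
    simp [algHom_C, add_assoc]
  have hf := DFunLike.congr_fun h f
  simp only [AlgHom.comp_apply, AlgHom.restrictScalars_apply, mapAlgHom_apply] at hf
  rw [hasseDeriv_apply, hasseDeriv_apply, hf]
  exact coeff_map _ _ _

variable [Fintype σ]

/-- The product of binomial coefficients `∏ᵢ (νᵢ choose μᵢ)`; it vanishes unless `μ ≤ ν`. -/
def prodChoose (ν μ : σ →₀ ℕ) : ℕ := ∏ i, (ν i).choose (μ i)

lemma prodChoose_eq_zero {ν μ : σ →₀ ℕ} (h : ¬μ ≤ ν) : prodChoose ν μ = 0 := by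
  rw [Finsupp.le_def, not_forall] at h
  obtain ⟨i, hi⟩ := h
  exact prod_eq_zero (mem_univ i) (Nat.choose_eq_zero_of_lt (not_le.1 hi))

lemma prodChoose_le_two_pow {ν μ : σ →₀ ℕ} {r : σ → ℕ} (h : ∀ i, ν i ≤ r i) :
    prodChoose ν μ ≤ 2 ^ ∑ i, r i := by
  rw [← prod_pow_eq_pow_sum]
  exact prod_le_prod' fun i _ =>
    (Nat.choose_le_two_pow _ _).trans (Nat.pow_le_pow_right two_pos (h i))

lemma coeff_taylorAt_monomial (a : σ → A) (ν μ : σ →₀ ℕ) (c : R) :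
    coeff μ (taylorAt a (monomial ν c)) =
      algebraMap R A c * (prodChoose ν μ * ∏ i, a i ^ (ν i - μ i)) := by
  classical
  let term (κ : σ → ℕ) : A := ∏ i, (ν i).choose (κ i) * a i ^ (ν i - κ i)
  have expand : taylorAt a (monomial ν c) = C (algebraMap R A c) *
      ∑ κ ∈ Fintype.piFinset fun i => range (ν i + 1),
        monomial (Finsupp.equivFunOnFinite.symm κ) (term κ) := by
    rw [taylorAt, aeval_monomial, Finsupp.prod_fintype _ _ fun i => pow_zero _]
    simp only [add_pow, prod_univ_sum, MvPolynomial.algebraMap_apply]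
    refine congr_arg _ (sum_congr rfl fun κ _ => ?_)
    rw [monomial_eq, Finsupp.prod_fintype _ _ fun i => pow_zero _, map_prod, ← prod_mul_distrib]
    refine prod_congr rfl fun i _ => ?_
    simp only [Finsupp.equivFunOnFinite_symm_apply_apply, map_mul, map_natCast, map_pow]
    ring
  rw [expand, coeff_C_mul, coeff_sum]
  simp only [coeff_monomial, Equiv.symm_apply_eq, sum_ite_eq']
  rw [prodChoose, Nat.cast_prod, ← prod_mul_distrib]
  refine congr_arg _ (ite_eq_left_iff.2 fun hμ => ?_)
  obtain ⟨i, hi⟩ : ∃ i, ν i < μ i := by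
    simpa [Fintype.mem_piFinset, Nat.lt_succ_iff] using hμ
  exact (prod_eq_zero (mem_univ i) (by simp [Nat.choose_eq_zero_of_lt hi])).symm

lemma coeff_taylorAt (a : σ → A) (μ : σ →₀ ℕ) (f : MvPolynomial σ R) :
    coeff μ (taylorAt a f) =
      ∑ ν ∈ f.support, algebraMap R A (coeff ν f) *
        (prodChoose ν μ * ∏ i, a i ^ (ν i - μ i)) := by
  conv_lhs => rw [f.as_sum, map_sum, coeff_sum]
  exact sum_congr rfl fun ν _ => coeff_taylorAt_monomial a ν μ _

lemma hasseDeriv_monomial (μ ν : σ →₀ ℕ) (c : R) :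
    hasseDeriv μ (monomial ν c) = monomial (ν - μ) (c * prodChoose ν μ) := by
  rw [hasseDeriv_apply, coeff_taylorAt_monomial, monomial_eq,
    Finsupp.prod_fintype _ _ fun i => pow_zero _]
  simp [mul_assoc, algebraMap_eq]

lemma coeff_hasseDeriv (μ κ : σ →₀ ℕ) (f : MvPolynomial σ R) :
    coeff κ (hasseDeriv μ f) = coeff (κ + μ) f * prodChoose (κ + μ) μ := by
  classical
  induction f using MvPolynomial.induction_on' with
  | add p q hp hq => rw [map_add, coeff_add, hp, hq, coeff_add, add_mul]
  | monomial ν c =>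
    rw [hasseDeriv_monomial, coeff_monomial, coeff_monomial]
    rcases em (μ ≤ ν) with hle | hle
    · rcases eq_or_ne ν (κ + μ) with rfl | hne
      · simp
      · rw [if_neg fun h => hne (by rw [← h, tsub_add_cancel_of_le hle]), if_neg hne, zero_mul]
    · rw [if_neg (fun h : ν = κ + μ => hle (h ▸ le_add_self)), prodChoose_eq_zero hle]
      simp

lemma coeff_taylorAt_hasseDeriv (a : σ → A) (μ κ : σ →₀ ℕ) (f : MvPolynomial σ R) :
    coeff κ (taylorAt a (hasseDeriv μ f)) =
      coeff (κ + μ) (taylorAt a f) * prodChoose (κ + μ) μ := by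
  rw [← hasseDeriv_taylorAt, coeff_hasseDeriv]

lemma prodChoose_mul_add_one (κ μ : σ →₀ ℕ) (i : σ) :
    prodChoose (κ + (μ + Finsupp.single i 1)) μ * (κ i + 1) =
      (μ i + 1) * prodChoose (κ + (μ + Finsupp.single i 1)) (μ + Finsupp.single i 1) := by
  classical
  have off_i : ∀ j ∈ univ.erase i, ((κ + (μ + Finsupp.single i 1) : σ →₀ ℕ) j).choose (μ j) =
      ((κ + (μ + Finsupp.single i 1) : σ →₀ ℕ) j).choose ((μ + Finsupp.single i 1 : σ →₀ ℕ) j) :=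
    fun j hj => by simp [Finsupp.single_eq_of_ne (ne_of_mem_erase hj)]
  have at_i := Nat.choose_succ_right_eq (κ i + (μ i + 1)) (μ i)
  rw [show κ i + (μ i + 1) - μ i = κ i + 1 by omega] at at_i
  simp only [prodChoose]
  rw [← mul_prod_erase _ _ (mem_univ i), ← mul_prod_erase _ _ (mem_univ i), prod_congr rfl off_i]
  simp only [Finsupp.add_apply, Finsupp.single_eq_same]
  rw [mul_right_comm, ← at_i]
  ring

end Taylor

section HasseDeriv

variable {σ R : Type*} [CommRing R] [Finite σ]

lemma hasseDeriv_map {S : Type*} [CommRing S] (g : R →+* S) (μ : σ →₀ ℕ) (f : MvPolynomial σ R) :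
    hasseDeriv μ (map g f) = map g (hasseDeriv μ f) := by
  cases nonempty_fintype σ
  ext κ
  simp [coeff_hasseDeriv, coeff_map]

lemma hasseDeriv_zero (f : MvPolynomial σ R) : hasseDeriv 0 f = f := by
  cases nonempty_fintype σ
  ext κ
  simp [coeff_hasseDeriv, prodChoose]

lemma pderiv_hasseDeriv (μ : σ →₀ ℕ) (i : σ) (f : MvPolynomial σ R) :
    pderiv i (hasseDeriv μ f) = ((μ i + 1 : ℕ) : R) • hasseDeriv (μ + Finsupp.single i 1) f := by
  cases nonempty_fintype σ
  ext κ
  have h := congr_arg (Nat.cast : ℕ → R) (prodChoose_mul_add_one κ μ i)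
  rw [coeff_pderiv, coeff_smul, coeff_hasseDeriv, coeff_hasseDeriv, smul_eq_mul,
    show κ + Finsupp.single i 1 + μ = κ + (μ + Finsupp.single i 1) by abel]
  push_cast at h ⊢
  linear_combination coeff (κ + (μ + Finsupp.single i 1)) f * h

lemma degreeOf_hasseDeriv_le (μ : σ →₀ ℕ) (i : σ) (f : MvPolynomial σ R) :
    degreeOf i (hasseDeriv μ f) ≤ degreeOf i f := by
  cases nonempty_fintype σ
  refine degreeOf_le_iff.2 fun κ hκ => ?_
  rw [mem_support_iff, coeff_hasseDeriv] at hκ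
  exact (Nat.le_add_right _ _).trans
    (degreeOf_le_iff.1 le_rfl _ (mem_support_iff.2 (left_ne_zero_of_mul hκ)))

end HasseDeriv

/-! ### Determinants of matrices of polynomials -/

section Det

variable {σ R ι : Type*} [CommRing R]

lemma exists_sum_eq_of_mem_support_prod {f : ι → MvPolynomial σ R} {s : Finset ι} {ν : σ →₀ ℕ}
    (hν : ν ∈ (∏ i ∈ s, f i).support) :
    ∃ κ : ι → σ →₀ ℕ, (∀ i ∈ s, κ i ∈ (f i).support) ∧ ∑ i ∈ s, κ i = ν := by
  classical
  induction s using Finset.induction_on generalizing ν with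
  | empty =>
    refine ⟨0, by simp, ?_⟩
    by_contra h
    rw [prod_empty, mem_support_iff, coeff_one, if_neg (by simpa using h)] at hν
    exact hν rfl
  | insert i s hi ih =>
    rw [prod_insert hi] at hν
    obtain ⟨μ, hμ, ρ, hρ, rfl⟩ := Finset.mem_add.1 (support_mul _ _ hν)
    obtain ⟨κ, hκ, rfl⟩ := ih hρ
    have off_i : ∀ j ∈ s, Function.update κ i μ j = κ j := fun j hj =>
      Function.update_of_ne (ne_of_mem_of_not_mem hj hi) _ _
    refine ⟨Function.update κ i μ, ?_, ?_⟩
    · simp only [forall_mem_insert, Function.update_self]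
      exact ⟨hμ, fun j hj => by simpa only [off_i j hj] using hκ j hj⟩
    · rw [sum_insert hi, Function.update_self, sum_congr rfl off_i]

variable [Fintype ι] [DecidableEq ι]

lemma exists_sum_eq_of_mem_support_det {M : Matrix ι ι (MvPolynomial σ R)} {ν : σ →₀ ℕ}
    (hν : ν ∈ M.det.support) :
    ∃ (τ : Equiv.Perm ι) (κ : ι → σ →₀ ℕ), (∀ i, κ i ∈ (M (τ i) i).support) ∧ ∑ i, κ i = ν := by
  classical
  rw [Matrix.det_apply] at hν
  obtain ⟨τ, -, hτ⟩ := mem_biUnion.1 (support_sum hν)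
  have hprod : ν ∈ (∏ i, M (τ i) i).support := by
    rcases Int.units_eq_one_or (Equiv.Perm.sign τ) with h | h <;> simpa [h] using hτ
  obtain ⟨κ, hκ, hsum⟩ := exists_sum_eq_of_mem_support_prod hprod
  exact ⟨τ, κ, fun i => hκ i (mem_univ i), hsum⟩

lemma degreeOf_det_le {M : Matrix ι ι (MvPolynomial σ R)} {i : σ} {d : ℕ}
    (hM : ∀ j l, degreeOf i (M j l) ≤ d) : degreeOf i M.det ≤ Fintype.card ι * d := by
  refine degreeOf_le_iff.2 fun ν hν => ?_
  obtain ⟨τ, κ, hκ, rfl⟩ := exists_sum_eq_of_mem_support_det hν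
  rw [Finsupp.finsetSum_apply, ← Finset.card_univ, ← smul_eq_mul]
  exact sum_le_card_nsmul _ _ _ fun l _ => degreeOf_le_iff.1 (hM (τ l) l) _ (hκ l)

end Det

/-! ### The index of a polynomial at a point -/

section Index

variable {σ R A : Type*} [CommRing R] [CommRing A] [Algebra R A]

/-- The weight `∑ᵢ μᵢ / rᵢ` of a multi-index relative to the degrees `r`. -/
def relWeight (r : σ → ℕ) : (σ →₀ ℕ) →+ ℝ := Finsupp.weight fun i => (r i : ℝ)⁻¹

lemma relWeight_eq_sum [Fintype σ] (r : σ → ℕ) (μ : σ →₀ ℕ) :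
    relWeight r μ = ∑ i, (μ i : ℝ) / r i := by
  simp [relWeight, Finsupp.weight_eq_sum, div_eq_mul_inv]

lemma relWeight_nonneg (r : σ → ℕ) (μ : σ →₀ ℕ) : 0 ≤ relWeight r μ := by
  rw [relWeight, Finsupp.weight_apply]
  exact Finsupp.sum_nonneg' fun i => by positivity

/-- The index of `f` at `a` relative to the degrees `r`, i.e. the least weight of a monomial in
the Taylor expansion of `f` at `a`, is at least `t`. It is `∞` for `f = 0`. -/
def HasIndexGE (r : σ → ℕ) (t : ℝ) (a : σ → A) (f : MvPolynomial σ R) : Prop :=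
  ∀ μ ∈ (taylorAt a f).support, t ≤ relWeight r μ

lemma HasIndexGE.mono {r : σ → ℕ} {s t : ℝ} {a : σ → A} {f : MvPolynomial σ R}
    (hf : HasIndexGE r t a f) (hst : s ≤ t) : HasIndexGE r s a f :=
  fun μ hμ => hst.trans (hf μ hμ)

lemma HasIndexGE.hasseDeriv [Finite σ] {r : σ → ℕ} {t : ℝ} {a : σ → A} {f : MvPolynomial σ R}
    (hf : HasIndexGE r t a f) (μ : σ →₀ ℕ) :
    HasIndexGE r (t - relWeight r μ) a (Roth.hasseDeriv μ f) := by
  cases nonempty_fintype σ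
  intro κ hκ
  rw [mem_support_iff, coeff_taylorAt_hasseDeriv] at hκ
  have := hf (κ + μ) (mem_support_iff.2 (left_ne_zero_of_mul hκ))
  rw [map_add] at this
  linarith

lemma HasIndexGE.det {ι : Type*} [Fintype ι] [DecidableEq ι] {r : σ → ℕ} {t : ι → ℝ} {a : σ → A}
    {M : Matrix ι ι (MvPolynomial σ R)} (hM : ∀ i j, HasIndexGE r (t j) a (M i j)) :
    HasIndexGE r (∑ j, t j) a M.det := by
  intro ν hν
  rw [AlgHom.map_det] at hν
  obtain ⟨τ, κ, hκ, rfl⟩ := exists_sum_eq_of_mem_support_det hν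
  rw [map_sum]
  exact sum_le_sum fun j _ => hM _ _ _ (hκ j)

end Index

/-! ### The sum of the absolute values of the coefficients -/

section L1Norm

variable {σ R ι : Type*} [NormedCommRing R]

/-- The sum of the norms of the coefficients of a polynomial. -/
def l1Norm (f : MvPolynomial σ R) : ℝ := ∑ ν ∈ f.support, ‖coeff ν f‖

lemma l1Norm_nonneg (f : MvPolynomial σ R) : 0 ≤ l1Norm f := sum_nonneg fun _ _ => norm_nonneg _

lemma l1Norm_eq_sum {f : MvPolynomial σ R} {s : Finset (σ →₀ ℕ)} (h : f.support ⊆ s) :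
    l1Norm f = ∑ ν ∈ s, ‖coeff ν f‖ :=
  sum_subset h fun ν _ hν => by rw [notMem_support_iff.1 hν, norm_zero]

lemma sum_norm_coeff_le_l1Norm (f : MvPolynomial σ R) (s : Finset (σ →₀ ℕ)) :
    ∑ ν ∈ s, ‖coeff ν f‖ ≤ l1Norm f := by
  classical
  rw [l1Norm_eq_sum (subset_union_left (s₂ := s))]
  exact sum_le_sum_of_subset_of_nonneg subset_union_right fun _ _ _ => norm_nonneg _

lemma norm_coeff_le_l1Norm (f : MvPolynomial σ R) (ν : σ →₀ ℕ) : ‖coeff ν f‖ ≤ l1Norm f := by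
  simpa using sum_norm_coeff_le_l1Norm f {ν}

lemma l1Norm_zero : l1Norm (0 : MvPolynomial σ R) = 0 := by simp [l1Norm]

lemma l1Norm_monomial (ν : σ →₀ ℕ) (c : R) : l1Norm (monomial ν c) = ‖c‖ := by
  classical
  rw [l1Norm_eq_sum support_monomial_subset, sum_singleton, coeff_monomial, if_pos rfl]

lemma l1Norm_neg (f : MvPolynomial σ R) : l1Norm (-f) = l1Norm f := by
  simp [l1Norm, support_neg]

lemma l1Norm_add_le (f g : MvPolynomial σ R) : l1Norm (f + g) ≤ l1Norm f + l1Norm g := by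
  classical
  rw [l1Norm_eq_sum support_add, l1Norm_eq_sum (subset_union_left (s₂ := g.support)),
    l1Norm_eq_sum (subset_union_right (s₁ := f.support)), ← sum_add_distrib]
  exact sum_le_sum fun ν _ => by simpa only [coeff_add] using norm_add_le _ _

lemma l1Norm_sum_le (s : Finset ι) (f : ι → MvPolynomial σ R) :
    l1Norm (∑ i ∈ s, f i) ≤ ∑ i ∈ s, l1Norm (f i) :=
  le_sum_of_subadditive _ l1Norm_zero.le l1Norm_add_le _ _

lemma l1Norm_mul_le (f g : MvPolynomial σ R) : l1Norm (f * g) ≤ l1Norm f * l1Norm g := by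
  rw [MvPolynomial.mul_def]
  refine (l1Norm_sum_le _ _).trans ?_
  rw [l1Norm, l1Norm, sum_mul_sum]
  refine sum_le_sum fun μ _ => (l1Norm_sum_le _ _).trans (sum_le_sum fun ν _ => ?_)
  rw [l1Norm_monomial]
  exact norm_mul_le _ _

variable [NormOneClass R]

lemma l1Norm_prod_le (s : Finset ι) (f : ι → MvPolynomial σ R) :
    l1Norm (∏ i ∈ s, f i) ≤ ∏ i ∈ s, l1Norm (f i) :=
  le_prod_of_submultiplicative_of_nonneg _ l1Norm_nonneg
    (by rw [← C_1, C_apply, l1Norm_monomial, norm_one]) l1Norm_mul_le _ _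

lemma l1Norm_det_le [Fintype ι] [DecidableEq ι] {M : Matrix ι ι (MvPolynomial σ R)} {B : ℝ}
    (hM : ∀ i j, l1Norm (M i j) ≤ B) :
    l1Norm M.det ≤ (Fintype.card ι).factorial * B ^ Fintype.card ι := by
  rw [Matrix.det_apply, ← Fintype.card_perm, ← nsmul_eq_mul, ← card_univ (α := Equiv.Perm ι)]
  refine (l1Norm_sum_le _ _).trans (sum_le_card_nsmul _ _ _ fun τ _ => ?_)
  have hprod : l1Norm (∏ i, M (τ i) i) ≤ B ^ Fintype.card ι :=
    (l1Norm_prod_le _ _).trans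
      ((prod_le_prod (fun _ _ => l1Norm_nonneg _) fun i _ => hM (τ i) i).trans_eq (by simp))
  rcases Int.units_eq_one_or (Equiv.Perm.sign τ) with h | h <;> simpa [h, l1Norm_neg] using hprod

lemma l1Norm_hasseDeriv_le [Fintype σ] {r : σ → ℕ} {f : MvPolynomial σ R}
    (hf : ∀ i, degreeOf i f ≤ r i) (μ : σ →₀ ℕ) :
    l1Norm (hasseDeriv μ f) ≤ 2 ^ (∑ i, r i) * l1Norm f := by
  conv_lhs => rw [f.as_sum, map_sum]
  conv_rhs => rw [l1Norm, mul_sum]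
  refine (l1Norm_sum_le _ _).trans (sum_le_sum fun ν hν => ?_)
  rw [hasseDeriv_monomial, l1Norm_monomial, mul_comm]
  have hchoose : ‖((prodChoose ν μ : ℕ) : R)‖ ≤ 2 ^ ∑ i, r i :=
    (Nat.norm_cast_le _).trans (by
      simpa using mod_cast prodChoose_le_two_pow fun i => degreeOf_le_iff.1 (hf i) ν hν)
  exact (norm_mul_le _ _).trans (mul_le_mul_of_nonneg_right hchoose (norm_nonneg _))

end L1Norm

/-! ### Generalized Wronskians -/

section Wronskian

variable {σ F : Type*} [Field F] [CharZero F]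

lemma totalDegree_pderiv_le {R : Type*} [CommSemiring R] (i : σ) (f : MvPolynomial σ R) :
    totalDegree (pderiv i f) ≤ totalDegree f - 1 := by
  refine Finset.sup_le fun ν hν => ?_
  rw [mem_support_iff, coeff_pderiv] at hν
  have h := le_totalDegree (mem_support_iff.2 (left_ne_zero_of_mul hν))
  rw [Finsupp.sum_add_index' (fun _ => rfl) fun _ _ _ => rfl, Finsupp.sum_single_index rfl] at h
  omega

lemma exists_pderiv_ne_zero {f : MvPolynomial σ F} (hf : totalDegree f ≠ 0) :
    ∃ i, pderiv i f ≠ 0 := by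
  classical
  contrapose! hf
  refine totalDegree_eq_zero_iff_eq_C.2 (ext _ _ fun ν => ?_)
  rw [coeff_C]
  split_ifs with h0
  · rw [h0]
  obtain ⟨i, hi⟩ : ∃ i, ν i ≠ 0 := by
    simpa only [ne_eq, Finsupp.coe_zero, Pi.zero_apply] using
      Function.ne_iff.1 (DFunLike.coe_injective.ne (Ne.symm h0))
  have h := congr_arg (coeff (ν - Finsupp.single i 1)) (hf i)
  rw [coeff_pderiv, tsub_add_cancel_of_le (by rw [Finsupp.single_le_iff]; omega), coeff_zero] at h
  exact (mul_eq_zero.1 h).resolve_right (Nat.cast_add_one_ne_zero _)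

lemma exists_C_mem_of_pderiv_mem {ι : Type*} [Finite ι] {N : Set (ι → MvPolynomial σ F)}
    (hN : ∀ c ∈ N, ∀ i, (fun j => pderiv i (c j)) ∈ N) {c : ι → MvPolynomial σ F} (hc : c ∈ N)
    (hc0 : c ≠ 0) : ∃ a : ι → F, a ≠ 0 ∧ (fun j => C (a j)) ∈ N := by
  cases nonempty_fintype ι
  obtain ⟨T, hT⟩ : ∃ T, ∀ j, totalDegree (c j) ≤ T :=
    ⟨_, fun j => Finset.le_sup (f := fun j => totalDegree (c j)) (mem_univ j)⟩
  induction T generalizing c with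
  | zero =>
    have hconst : (fun j => C (coeff 0 (c j))) = c :=
      funext fun j => (totalDegree_eq_zero_iff_eq_C.1 (Nat.le_zero.1 (hT j))).symm
    refine ⟨fun j => coeff 0 (c j), fun h => hc0 ?_, by rwa [hconst]⟩
    rw [← hconst]
    exact funext fun j => by rw [congr_fun h j, Pi.zero_apply, C_0, Pi.zero_apply]
  | succ T ih =>
    by_cases hconst : ∀ j, totalDegree (c j) = 0
    · exact ih hc hc0 fun j => (hconst j).le.trans T.zero_le
    · obtain ⟨j, hj⟩ := not_forall.1 hconst
      obtain ⟨i, hi⟩ := exists_pderiv_ne_zero hj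
      refine ih (hN c hc i) (fun h => hi (congr_fun h j)) fun l => ?_
      exact (totalDegree_pderiv_le i (c l)).trans (by have := hT l; omega)

lemma exists_ne_zero_forall_dotProduct_eq_zero {R : Type*} [CommRing R] [Nontrivial R] {i k : ℕ}
    (v : Fin i → Fin k → R) (h : i < k) : ∃ c : Fin k → R, c ≠ 0 ∧ ∀ l, c ⬝ᵥ v l = 0 := by
  have not_inj : ¬Function.Injective (Matrix.of v).mulVecLin :=
    fun hinj => h.not_ge (le_of_fin_injective R _ hinj)
  rw [← LinearMap.ker_eq_bot, Submodule.eq_bot_iff] at not_inj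
  push Not at not_inj
  obtain ⟨c, hc, hc0⟩ := not_inj
  exact ⟨c, hc0, fun l => (dotProduct_comm _ _).trans (congr_fun hc l)⟩

lemma dotProduct_eq_zero_of_not_linearIndependent_cons {R : Type*} [CommRing R] [IsDomain R]
    {i k : ℕ} {v : Fin i → Fin k → R} {w c : Fin k → R} (hv : LinearIndependent R v)
    (hw : ¬LinearIndependent R (Fin.cons w v : Fin (i + 1) → Fin k → R))
    (hc : ∀ l, c ⬝ᵥ v l = 0) : c ⬝ᵥ w = 0 := by
  obtain ⟨b, y, hy, hby, hb⟩ : ∃ b : R, ∃ y ∈ Submodule.span R (Set.range v),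
      b • w + y = 0 ∧ b ≠ 0 := by
    contrapose! hw
    exact LinearIndependent.finCons' w v hv fun b y hy => hw b y hy
  have hcy : c ⬝ᵥ y = 0 := by
    clear hby
    induction hy using Submodule.span_induction with
    | mem y hy => obtain ⟨l, rfl⟩ := hy; exact hc l
    | zero => exact dotProduct_zero c
    | add y z _ _ hy hz => rw [dotProduct_add, hy, hz, add_zero]
    | smul a y _ hy => rw [dotProduct_smul, hy, smul_zero]
  have h := congr_arg (c ⬝ᵥ ·) hby
  simp only [dotProduct_add, dotProduct_smul, hcy, add_zero, dotProduct_zero, smul_eq_mul] at h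
  exact (mul_eq_zero.1 h).resolve_left hb

variable [Finite σ]

lemma exists_linearIndependent_hasseDeriv {k : ℕ} {φ : Fin k → MvPolynomial σ F}
    (hφ : LinearIndependent F φ) {i : ℕ} (hi : i ≤ k) :
    ∃ μ : Fin i → σ →₀ ℕ, (∀ l, (μ l).degree < i) ∧
      LinearIndependent (MvPolynomial σ F) fun l j => hasseDeriv (μ l) (φ j) := by
  induction i with
  | zero => exact ⟨fun _ => 0, fun l => l.elim0, linearIndependent_empty_type⟩
  | succ i ih =>
    obtain ⟨μ, hμ, hli⟩ := ih (by omega)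
    suffices ∃ κ : σ →₀ ℕ, κ.degree ≤ i ∧ LinearIndependent (MvPolynomial σ F)
        (Fin.cons (fun j => hasseDeriv κ (φ j)) fun l j => hasseDeriv (μ l) (φ j) :
          Fin (i + 1) → Fin k → MvPolynomial σ F) by
      obtain ⟨κ, hκ, hcons⟩ := this
      refine ⟨Fin.cons κ μ, ?_, ?_⟩
      · exact Fin.cases (Nat.lt_succ_of_le hκ) fun l => (hμ l).trans i.lt_succ_self
      · convert hcons using 1
        exact funext (Fin.cases rfl fun _ => rfl)
    by_contra! hdep
    have annihilates {c : Fin k → MvPolynomial σ F}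
        (hc : ∀ l, c ⬝ᵥ (fun j => hasseDeriv (μ l) (φ j)) = 0) {κ : σ →₀ ℕ} (hκ : κ.degree ≤ i) :
        c ⬝ᵥ (fun j => hasseDeriv κ (φ j)) = 0 :=
      dotProduct_eq_zero_of_not_linearIndependent_cons hli (hdep κ hκ) hc
    let N : Set (Fin k → MvPolynomial σ F) :=
      {c | ∀ l, c ⬝ᵥ (fun j => hasseDeriv (μ l) (φ j)) = 0}
    have hN : ∀ c ∈ N, ∀ x, (fun j => pderiv x (c j)) ∈ N := by
      intro c hc x l
      have hnext : c ⬝ᵥ (fun j => hasseDeriv (μ l + Finsupp.single x 1) (φ j)) = 0 :=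
        annihilates hc (by rw [map_add, Finsupp.degree_single]; exact hμ l)
      have h := congr_arg (pderiv x) (hc l)
      simp only [dotProduct, map_sum, pderiv_mul, pderiv_hasseDeriv, sum_add_distrib,
        mul_smul_comm, ← smul_sum, map_zero] at h hnext ⊢
      rwa [hnext, smul_zero, add_zero] at h
    obtain ⟨c, hc0, hc⟩ := exists_ne_zero_forall_dotProduct_eq_zero
      (fun l j => hasseDeriv (μ l) (φ j)) (show i < k by omega)
    obtain ⟨a, ha0, ha⟩ := exists_C_mem_of_pderiv_mem hN hc hc0
    have hrel : ∑ j, a j • φ j = 0 := by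
      simpa [dotProduct, hasseDeriv_zero, ← smul_eq_C_mul] using annihilates ha (κ := 0) (by simp)
    exact ha0 (funext (Fintype.linearIndependent_iff.1 hφ a hrel))

lemma exists_det_hasseDeriv_ne_zero {k : ℕ} {φ : Fin k → MvPolynomial σ F}
    (hφ : LinearIndependent F φ) :
    ∃ μ : Fin k → σ →₀ ℕ, (∀ l, (μ l).degree < k) ∧
      (Matrix.of fun l j => hasseDeriv (μ l) (φ j)).det ≠ 0 := by
  obtain ⟨μ, hμ, hli⟩ := exists_linearIndependent_hasseDeriv hφ le_rfl
  refine ⟨μ, hμ, fun hdet => ?_⟩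
  obtain ⟨v, hv0, hv⟩ := Matrix.exists_vecMul_eq_zero_iff.2 hdet
  refine hv0 (funext (Fintype.linearIndependent_iff.1 hli v ?_))
  rw [← hv, Matrix.vecMul_eq_sum]
  rfl

lemma hasseDeriv_uniqueAlgEquiv_symm {R : Type*} [CommRing R] (κ : Unit →₀ ℕ)
    (p : Polynomial R) :
    hasseDeriv κ ((uniqueAlgEquiv R Unit).symm p) =
      (uniqueAlgEquiv R Unit).symm (Polynomial.hasseDeriv (κ ()) p) := by
  ext ν
  rw [coeff_hasseDeriv, coeff_uniqueAlgEquiv_symm, coeff_uniqueAlgEquiv_symm,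
    Polynomial.hasseDeriv_coeff, mul_comm]
  simp [prodChoose]

lemma det_polynomial_hasseDeriv_ne_zero {k : ℕ} {ψ : Fin k → Polynomial F}
    (hψ : LinearIndependent F ψ) :
    (Matrix.of fun l j : Fin k => Polynomial.hasseDeriv (l : ℕ) (ψ j)).det ≠ 0 := by
  let e := (uniqueAlgEquiv F Unit).symm
  have he : LinearIndependent F fun j => e (ψ j) :=
    hψ.map' e.toLinearMap (LinearMap.ker_eq_bot.2 e.injective)
  obtain ⟨μ, hμ, hdet⟩ := exists_det_hasseDeriv_ne_zero he
  let τ (l : Fin k) : Fin k := ⟨μ l (), by simpa [Finsupp.degree_eq_sum] using hμ l⟩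
  have hτ : Function.Injective τ := by
    intro l m hlm
    by_contra hne
    have hμlm : μ l = μ m := Finsupp.ext fun _ => Fin.val_eq_of_eq hlm
    refine hdet (Matrix.det_zero_of_row_eq hne (funext fun j => ?_))
    simp only [Matrix.of_apply, hμlm]
  have hmap : (Matrix.of fun l j => hasseDeriv (μ l) (e (ψ j))) =
      e.toAlgHom.mapMatrix
        ((Matrix.of fun l j : Fin k => Polynomial.hasseDeriv (l : ℕ) (ψ j)).submatrix
          (Equiv.ofBijective τ (Finite.injective_iff_bijective.1 hτ)) id) :=
    Matrix.ext fun l j => hasseDeriv_uniqueAlgEquiv_symm _ _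
  intro h0
  refine hdet ?_
  rw [hmap, ← AlgHom.map_det, Matrix.det_permute, h0, mul_zero, map_zero]

end Wronskian

/-! ### Separating the first variable -/

section SepMul

variable {n : ℕ} {R : Type*} [CommRing R]

/-- The product `φ(X₁, …, Xₙ) ψ(X₀)` of polynomials in disjoint sets of variables. -/
def sepMul (φ : MvPolynomial (Fin n) R) (ψ : Polynomial R) : MvPolynomial (Fin (n + 1)) R :=
  rename Fin.succ φ * Polynomial.aeval (X 0) ψ

lemma coeff_cons_eq_coeff_finSuccEquiv (b : ℕ) (a : Fin n →₀ ℕ) (f : MvPolynomial (Fin (n + 1)) R) :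
    coeff (Finsupp.cons b a) f = coeff a ((finSuccEquiv R n f).coeff b) :=
  (finSuccEquiv_coeff_coeff a f b).symm

lemma ext_cons {f g : MvPolynomial (Fin (n + 1)) R}
    (h : ∀ b a, coeff (Finsupp.cons b a) f = coeff (Finsupp.cons b a) g) : f = g :=
  ext _ _ fun κ => by simpa only [Finsupp.cons_tail] using h (κ 0) κ.tail

lemma coeff_cons_sepMul (b : ℕ) (a : Fin n →₀ ℕ) (φ : MvPolynomial (Fin n) R)
    (ψ : Polynomial R) : coeff (Finsupp.cons b a) (sepMul φ ψ) = coeff a φ * ψ.coeff b := by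
  have hφ : finSuccEquiv R n (rename Fin.succ φ) = Polynomial.C φ := by
    induction φ using MvPolynomial.induction_on with
    | C c => rw [rename_C, finSuccEquiv_apply, eval₂Hom_C]; rfl
    | add f g hf hg => rw [map_add, map_add, hf, hg, Polynomial.C_add]
    | mul_X f i hf =>
      rw [map_mul, map_mul, hf, rename_X, finSuccEquiv_X_succ, Polynomial.C_mul]
  have hψ : finSuccEquiv R n (Polynomial.aeval (X 0) ψ) = ψ.map C := by
    rw [← Polynomial.aeval_algHom_apply, finSuccEquiv_X_zero]
    rfl
  rw [coeff_cons_eq_coeff_finSuccEquiv, sepMul, map_mul, hφ, hψ, Polynomial.coeff_C_mul,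
    Polynomial.coeff_map, mul_comm φ, coeff_C_mul, mul_comm]

lemma prodChoose_cons (b b' : ℕ) (a a' : Fin n →₀ ℕ) :
    prodChoose (Finsupp.cons b a) (Finsupp.cons b' a') = b.choose b' * prodChoose a a' := by
  simp [prodChoose, Fin.prod_univ_succ]

lemma relWeight_cons (r : Fin (n + 1) → ℕ) (b : ℕ) (a : Fin n →₀ ℕ) :
    relWeight r (Finsupp.cons b a) = b / r 0 + relWeight (Fin.tail r) a := by
  simp [relWeight_eq_sum, Fin.sum_univ_succ, Fin.tail]

lemma taylorAt_sepMul (x : Fin (n + 1) → R) (φ : MvPolynomial (Fin n) R) (ψ : Polynomial R) :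
    taylorAt x (sepMul φ ψ) = sepMul (taylorAt (Fin.tail x) φ) (Polynomial.taylor (x 0) ψ) := by
  have hφ : (taylorAt x).comp (rename Fin.succ) =
      (rename Fin.succ).comp (taylorAt (R := R) (Fin.tail x)) :=
    algHom_ext fun i => by simp [Fin.tail]
  have hψ : (taylorAt x).comp (Polynomial.aeval (R := R) (X 0)) =
      (Polynomial.aeval (X 0)).comp (Polynomial.taylorAlgHom (x 0)) :=
    Polynomial.algHom_ext (by simp [algebraMap_eq])
  rw [sepMul, map_mul, sepMul]
  exact congr_arg₂ _ (DFunLike.congr_fun hφ φ) (DFunLike.congr_fun hψ ψ)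

lemma hasseDeriv_cons_sepMul (b : ℕ) (a : Fin n →₀ ℕ) (φ : MvPolynomial (Fin n) R)
    (ψ : Polynomial R) :
    hasseDeriv (Finsupp.cons b a) (sepMul φ ψ) =
      sepMul (hasseDeriv a φ) (Polynomial.hasseDeriv b ψ) := by
  refine ext_cons fun b' a' => ?_
  have hadd : Finsupp.cons b' a' + Finsupp.cons b a = Finsupp.cons (b' + b) (a' + a) :=
    Finsupp.ext (Fin.cases (by simp) fun i => by simp)
  rw [coeff_hasseDeriv, hadd, coeff_cons_sepMul, coeff_cons_sepMul, coeff_hasseDeriv,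
    Polynomial.hasseDeriv_coeff, prodChoose_cons]
  push_cast
  ring

lemma det_sepMul_mul {ι : Type*} [Fintype ι] [DecidableEq ι]
    (V : Matrix ι ι (MvPolynomial (Fin n) R)) (U : Matrix ι ι (Polynomial R)) :
    (Matrix.of fun i l => ∑ j, sepMul (V i j) (U l j)).det = sepMul V.det U.det := by
  rw [sepMul, AlgHom.map_det, AlgHom.map_det, ← Matrix.det_transpose (AlgHom.mapMatrix _ U),
    ← Matrix.det_mul]
  rfl

end SepMul

section Field

variable {F : Type*} [Field F]

lemma exists_rank_factorization {ι M : Type*} [Fintype ι] [AddCommGroup M] [Module F M]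
    (g : ι → M) :
    ∃ k ≤ Fintype.card ι, ∃ (φ : Fin k → M) (a : Fin k → ι → F),
      LinearIndependent F φ ∧ LinearIndependent F a ∧ ∀ i, g i = ∑ j, a j i • φ j := by
  let S := Submodule.span F (Set.range g)
  have : FiniteDimensional F S := FiniteDimensional.span_of_finite F (Set.finite_range g)
  let basis := Module.finBasis F S
  have mem_S (i : ι) : g i ∈ S := Submodule.subset_span ⟨i, rfl⟩
  refine ⟨Module.finrank F S, finrank_range_le_card g, fun j => basis j,
    fun j i => basis.repr ⟨g i, mem_S i⟩ j, basis.linearIndependent.map' S.subtype S.ker_subtype,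
    Fintype.linearIndependent_iff.2 fun c hc => ?_, fun i => ?_⟩
  · let ℓ : S →ₗ[F] F := ∑ j, c j • basis.coord j
    have hℓg (i : ι) : ℓ ⟨g i, mem_S i⟩ = 0 := by simpa [ℓ] using congr_fun hc i
    have hℓ (x : S) : ℓ x = 0 := by
      obtain ⟨x, hx⟩ := x
      induction hx using Submodule.span_induction with
      | mem x hx => obtain ⟨i, rfl⟩ := hx; exact hℓg i
      | zero => exact map_zero ℓ
      | add x y hx hy hℓx hℓy =>
        exact (map_add ℓ ⟨x, hx⟩ ⟨y, hy⟩).trans (by rw [hℓx, hℓy, add_zero])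
      | smul b x hx hℓx => exact (map_smul ℓ b ⟨x, hx⟩).trans (by rw [hℓx, smul_zero])
    exact fun j => by simpa [ℓ, Finsupp.single_apply] using hℓ (basis j)
  · refine (congr_arg S.subtype (basis.sum_repr ⟨g i, mem_S i⟩)).symm.trans ?_
    simp only [map_sum, map_smul, Submodule.subtype_apply]

lemma exists_eq_sum_sepMul {n d : ℕ} {f : MvPolynomial (Fin (n + 1)) F} (hd : degreeOf 0 f ≤ d) :
    ∃ k ≤ d + 1, ∃ (φ : Fin k → MvPolynomial (Fin n) F) (ψ : Fin k → Polynomial F),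
      LinearIndependent F φ ∧ LinearIndependent F ψ ∧ f = ∑ j, sepMul (φ j) (ψ j) := by
  obtain ⟨k, hk, φ, a, hφ, ha, hg⟩ :=
    exists_rank_factorization (F := F) fun i : Fin (d + 1) => (finSuccEquiv F n f).coeff i
  let ψ (j : Fin k) : Polynomial F := ∑ i : Fin (d + 1), Polynomial.monomial (i : ℕ) (a j i)
  have coeff_ψ (j : Fin k) (i : Fin (d + 1)) : (ψ j).coeff i = a j i := by
    simp [ψ, Polynomial.finsetSum_coeff, Polynomial.coeff_monomial, Fin.val_inj]
  refine ⟨k, by simpa using hk, φ, ψ, hφ, Fintype.linearIndependent_iff.2 fun c hc => ?_,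
    ext_cons fun b e => ?_⟩
  · refine Fintype.linearIndependent_iff.1 ha c (funext fun i => ?_)
    simpa [Polynomial.finsetSum_coeff, coeff_ψ] using congr_arg (Polynomial.coeff · i) hc
  · simp only [coeff_sum, coeff_cons_sepMul]
    rcases lt_or_ge b (d + 1) with hb | hb
    · lift b to Fin (d + 1) using hb
      rw [coeff_cons_eq_coeff_finSuccEquiv, hg b, coeff_sum]
      exact sum_congr rfl fun j _ => by rw [coeff_smul, coeff_ψ, smul_eq_mul, mul_comm]
    · have hf : coeff (Finsupp.cons b e) f = 0 := by
        by_contra h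
        have := degreeOf_le_iff.1 hd _ (mem_support_iff.2 h)
        rw [Finsupp.cons_zero] at this
        omega
      have hψ (j : Fin k) : (ψ j).coeff b = 0 := by
        simp only [ψ, Polynomial.finsetSum_coeff, Polynomial.coeff_monomial]
        exact sum_eq_zero fun i _ => if_neg (by omega)
      simp [hf, hψ]

variable [CharZero F]

lemma exists_det_hasseDeriv_cons_eq_sepMul {n d : ℕ} {f : MvPolynomial (Fin (n + 1)) F}
    (hf : f ≠ 0) (hd : degreeOf 0 f ≤ d) :
    ∃ k, 0 < k ∧ k ≤ d + 1 ∧ ∃ μ : Fin k → Fin n →₀ ℕ, (∀ i, (μ i).degree < k) ∧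
      ∃ V U, V ≠ 0 ∧ U ≠ 0 ∧
        (Matrix.of fun i l : Fin k => hasseDeriv (Finsupp.cons (l : ℕ) (μ i)) f).det =
          sepMul V U := by
  obtain ⟨k, hk, φ, ψ, hφ, hψ, rfl⟩ := exists_eq_sum_sepMul hd
  obtain ⟨μ, hμ, hV⟩ := exists_det_hasseDeriv_ne_zero hφ
  refine ⟨k, Nat.pos_of_ne_zero ?_, hk, μ, hμ, _, _, hV, det_polynomial_hasseDeriv_ne_zero hψ, ?_⟩
  · rintro rfl
    exact hf (by simp)
  · rw [← det_sepMul_mul]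
    congr 1
    ext1 i l
    simp only [Matrix.of_apply, map_sum, hasseDeriv_cons_sepMul]

end Field

section IntegerSlices

variable {n : ℕ} {W : MvPolynomial (Fin (n + 1)) ℤ} {φ : MvPolynomial (Fin n) ℚ}
  {ψ : Polynomial ℚ}

lemma map_coeff_finSuccEquiv_eq_smul (hW : map (Int.castRingHom ℚ) W = sepMul φ ψ) (b : ℕ) :
    map (Int.castRingHom ℚ) ((finSuccEquiv ℤ n W).coeff b) = ψ.coeff b • φ := by
  ext a
  rw [coeff_map, ← coeff_cons_eq_coeff_finSuccEquiv, ← coeff_map, hW, coeff_cons_sepMul,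
    coeff_smul, smul_eq_mul, mul_comm]

lemma exists_int_polynomial_map_eq_smul (hW : map (Int.castRingHom ℚ) W = sepMul φ ψ)
    (a : Fin n →₀ ℕ) :
    ∃ T : Polynomial ℤ, T.map (Int.castRingHom ℚ) = coeff a φ • ψ ∧
      ∀ b, T.coeff b = coeff (Finsupp.cons b a) W := by
  have coeff_eq (b : ℕ) : (coeff a φ • ψ).coeff b = (coeff (Finsupp.cons b a) W : ℤ) := by
    rw [Polynomial.coeff_smul, smul_eq_mul, ← coeff_cons_sepMul, ← hW, coeff_map, eq_intCast]
  obtain ⟨T, hT⟩ := (Polynomial.lifts_iff_coeff_lifts (f := Int.castRingHom ℚ) (coeff a φ • ψ)).2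
    fun b => ⟨_, (coeff_eq b).symm⟩
  refine ⟨T, hT, fun b => Int.cast_injective (α := ℚ) ?_⟩
  rw [← coeff_eq, ← hT, Polynomial.coe_mapRingHom, Polynomial.coeff_map, eq_intCast]

lemma l1Norm_coeff_finSuccEquiv_le (W : MvPolynomial (Fin (n + 1)) ℤ) (b : ℕ) :
    l1Norm ((finSuccEquiv ℤ n W).coeff b) ≤ l1Norm W := by
  let e : (Fin n →₀ ℕ) ↪ (Fin (n + 1) →₀ ℕ) := ⟨Finsupp.cons b, Finsupp.cons_right_injective b⟩
  refine le_trans (le_of_eq ?_) (sum_norm_coeff_le_l1Norm W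
    (((finSuccEquiv ℤ n W).coeff b).support.map e))
  rw [sum_map]
  exact sum_congr rfl fun a _ => by rw [← coeff_cons_eq_coeff_finSuccEquiv]; rfl

end IntegerSlices

section GaussLemma

variable (x : ℚ)

lemma isPrimitive_C_den_mul_X_sub_C_num :
    (Polynomial.C (x.den : ℤ) * Polynomial.X - Polynomial.C x.num).IsPrimitive := by
  refine Polynomial.isPrimitive_iff_isUnit_of_C_dvd.2 fun c hc => ?_
  rw [Polynomial.C_dvd_iff_dvd_coeff] at hc
  refine (Rat.isCoprime_num_den x).isUnit_of_dvd' ?_ ?_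
  · simpa using hc 0
  · simpa only [Polynomial.coeff_sub, Polynomial.coeff_C_mul, Polynomial.coeff_X_one, mul_one,
      Polynomial.coeff_C_of_ne_zero one_ne_zero, sub_zero] using hc 1

lemma den_pow_rootMultiplicity_dvd_leadingCoeff (T : Polynomial ℤ) :
    (x.den : ℤ) ^ (T.map (Int.castRingHom ℚ)).rootMultiplicity x ∣ T.leadingCoeff := by
  set m := (T.map (Int.castRingHom ℚ)).rootMultiplicity x
  let ℓ : Polynomial ℤ := Polynomial.C (x.den : ℤ) * Polynomial.X - Polynomial.C x.num
  have hden : (x.den : ℚ) ≠ 0 := Nat.cast_ne_zero.2 x.den_ne_zero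
  have map_ℓ : ℓ.map (Int.castRingHom ℚ) =
      Polynomial.C (x.den : ℚ) * (Polynomial.X - Polynomial.C x) := by
    rw [mul_sub, ← Polynomial.C_mul, mul_comm _ x, Rat.mul_den_eq_num]
    simp [ℓ]
  have leadingCoeff_ℓ : ℓ.leadingCoeff = x.den := by
    have h := Polynomial.leadingCoeff_linear (b := -x.num) (Int.natCast_ne_zero.2 x.den_ne_zero)
    rwa [Polynomial.C_neg, ← sub_eq_add_neg] at h
  have isPrimitive_pow : (ℓ ^ m).IsPrimitive := by
    induction m with
    | zero => simpa only [pow_zero] using Polynomial.isPrimitive_one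
    | succ m ih => rw [pow_succ]; exact ih.mul (isPrimitive_C_den_mul_X_sub_C_num x)
  have ℓ_dvd : ℓ ^ m ∣ T := by
    rw [Polynomial.IsPrimitive.Int.dvd_iff_map_cast_dvd_map_cast _ _ isPrimitive_pow,
      Polynomial.map_pow, map_ℓ, mul_pow,
      IsUnit.mul_left_dvd ((Polynomial.isUnit_C.2 hden.isUnit).pow m)]
    exact Polynomial.pow_rootMultiplicity_dvd _ _
  simpa only [Polynomial.leadingCoeff_pow, leadingCoeff_ℓ] using
    Polynomial.leadingCoeff_dvd_leadingCoeff ℓ_dvd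

end GaussLemma

/-! ### Roth's lemma -/

/-- The setting of Roth's lemma: the degrees `r` grow at least by the factor `σ⁻¹` from one
variable to the next, while all the products `r h * log (den (ξ h))` are at least `L`, and `L` is
large in comparison with the degrees. -/
structure IsAdmissible {n : ℕ} (σ L : ℝ) (r : Fin n → ℕ) (ξ : Fin n → ℚ) : Prop where
  scale_pos : 0 < L
  degree_pos (h : Fin n) : 0 < r h
  degree_le_mul {i j : Fin n} (hij : i < j) : (r i : ℝ) ≤ σ * r j
  scale_le (h : Fin n) : L ≤ r h * Real.log (ξ h).den
  degree_le (h : Fin n) : (r h : ℝ) ≤ σ * L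

/-- Roth's lemma for the constants `η` and `σ`: a nonzero integer polynomial of partial degrees at
most `r` with coefficients of size at most `exp (σ L)` has index less than `η` at every admissible
point. -/
def RothLemma (n : ℕ) (η σ : ℝ) : Prop :=
  ∀ ⦃r : Fin n → ℕ⦄ ⦃ξ : Fin n → ℚ⦄ ⦃L : ℝ⦄ ⦃P : MvPolynomial (Fin n) ℤ⦄, IsAdmissible σ L r ξ →
    P ≠ 0 → (∀ i, degreeOf i P ≤ r i) → l1Norm P ≤ Real.exp (σ * L) → ¬HasIndexGE r η ξ P

section Admissible

variable {n : ℕ} {σ L : ℝ}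

lemma IsAdmissible.mono {τ : ℝ} {r : Fin n → ℕ} {ξ : Fin n → ℚ} (h : IsAdmissible σ L r ξ)
    (hστ : σ ≤ τ) : IsAdmissible τ L r ξ where
  scale_pos := h.scale_pos
  degree_pos := h.degree_pos
  degree_le_mul hij := (h.degree_le_mul hij).trans (by gcongr)
  scale_le := h.scale_le
  degree_le i := (h.degree_le i).trans (mul_le_mul_of_nonneg_right hστ h.scale_pos.le)

lemma IsAdmissible.nsmul_tail {r : Fin (n + 1) → ℕ} {ξ : Fin (n + 1) → ℚ}
    (h : IsAdmissible σ L r ξ) {k : ℕ} (hk : 0 < k) :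
    IsAdmissible σ (k * L) (k • Fin.tail r) (Fin.tail ξ) where
  scale_pos := mul_pos (Nat.cast_pos.2 hk) h.scale_pos
  degree_pos i := Nat.mul_pos hk (h.degree_pos _)
  degree_le_mul {i j} hij := by
    have := h.degree_le_mul (Fin.succ_lt_succ_iff.2 hij)
    simp only [Pi.smul_apply, smul_eq_mul, Nat.cast_mul, Fin.tail, mul_left_comm σ]
    gcongr
  scale_le i := by
    have := h.scale_le i.succ
    simp only [Pi.smul_apply, smul_eq_mul, Nat.cast_mul, Fin.tail, mul_assoc]
    gcongr
  degree_le i := by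
    have := h.degree_le i.succ
    simp only [Pi.smul_apply, smul_eq_mul, Nat.cast_mul, Fin.tail, mul_left_comm σ]
    gcongr

end Admissible

lemma relWeight_nsmul {τ : Type*} (k : ℕ) (r : τ → ℕ) (μ : τ →₀ ℕ) :
    relWeight (k • r) μ = relWeight r μ / k := by
  simp only [relWeight, Finsupp.weight_apply, Finsupp.sum, Pi.smul_apply, smul_eq_mul,
    Nat.cast_mul, mul_inv_rev, div_eq_mul_inv, nsmul_eq_mul, sum_mul, mul_assoc]

lemma relWeight_le_of_degree_le {τ : Type*} [Finite τ] {r : τ → ℕ} {μ : τ →₀ ℕ} {d : ℕ} {c : ℝ}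
    (hd : 0 < d) (hc : 0 ≤ c) (hr : ∀ i, (d : ℝ) ≤ c * r i) (hμ : μ.degree ≤ d) :
    relWeight r μ ≤ c := by
  cases nonempty_fintype τ
  have hd' : (0 : ℝ) < d := Nat.cast_pos.2 hd
  have term_le (i : τ) : (μ i : ℝ) / r i ≤ c / d * μ i := by
    have hri : (0 : ℝ) < r i := pos_of_mul_pos_right (hd'.trans_le (hr i)) hc
    rw [div_mul_eq_mul_div, div_le_div_iff₀ hri hd', mul_right_comm, mul_comm (μ i : ℝ)]
    exact mul_le_mul_of_nonneg_right (hr i) (Nat.cast_nonneg _)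
  calc relWeight r μ ≤ ∑ i, c / d * μ i := by
        rw [relWeight_eq_sum]; exact sum_le_sum fun i _ => term_le i
    _ = c / d * μ.degree := by rw [← mul_sum, Finsupp.degree_eq_sum, Nat.cast_sum]
    _ ≤ c / d * d := by gcongr
    _ = c := div_mul_cancel₀ c hd'.ne'

lemma le_sum_max_sub_div {k d : ℕ} (hd : 0 < d) (hkd : k ≤ d + 1) {c : ℝ} (hc : 0 < c)
    (hc1 : c ≤ 1) : k * c ^ 2 / 8 ≤ ∑ l : Fin k, max 0 (c - l / d) := by
  have hd' : (0 : ℝ) < d := Nat.cast_pos.2 hd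
  have hk2d : (k : ℝ) ≤ 2 * d := by exact_mod_cast (by omega : k ≤ 2 * d)
  let m := min k (⌊c * d / 2⌋₊ + 1)
  have term_ge : ∀ l ∈ range m, c / 2 ≤ max 0 (c - (l : ℝ) / d) := fun l hl => by
    have hl' : l ≤ ⌊c * d / 2⌋₊ := Nat.lt_succ_iff.1 ((mem_range.1 hl).trans_le (min_le_right _ _))
    have hlc : (l : ℝ) / d ≤ c / 2 := by
      rw [div_le_iff₀ hd']
      linarith [(Nat.le_floor_iff (by positivity)).1 hl']
    exact le_max_of_le_right (by linarith)
  have m_ge : k * c / 4 ≤ (m : ℝ) := by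
    rw [Nat.cast_min, le_min_iff]
    refine ⟨by nlinarith [Nat.cast_nonneg (α := ℝ) k], ?_⟩
    push_cast
    nlinarith [(Nat.lt_floor_add_one (c * d / 2)).le]
  calc k * c ^ 2 / 8 = k * c / 4 * (c / 2) := by ring
    _ ≤ m * (c / 2) := by gcongr
    _ = ∑ l ∈ range m, c / 2 := by rw [sum_const, card_range, nsmul_eq_mul]
    _ ≤ ∑ l ∈ range m, max 0 (c - (l : ℝ) / d) := sum_le_sum term_ge
    _ ≤ ∑ l ∈ range k, max 0 (c - (l : ℝ) / d) :=
      sum_le_sum_of_subset_of_nonneg (range_subset_range.2 (min_le_left _ _))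
        fun _ _ _ => le_max_left _ _
    _ = _ := (Fin.sum_univ_eq_sum_range (fun l : ℕ => max 0 (c - (l : ℝ) / d)) k).symm

lemma l1Norm_det_hasseDeriv_le {τ : Type*} [Fintype τ] {k : ℕ} {r : τ → ℕ} {S : ℝ}
    {f : MvPolynomial τ ℤ} (hf : ∀ i, degreeOf i f ≤ r i) (hr : ∀ i, (r i : ℝ) ≤ S)
    (hk : (k : ℝ) ≤ Real.exp S) (hfS : l1Norm f ≤ Real.exp S) (μ : Fin k → Fin k → τ →₀ ℕ) :
    l1Norm (Matrix.of fun i l => hasseDeriv (μ i l) f).det ≤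
      Real.exp (k * ((Fintype.card τ + 2) * S)) := by
  have two_pow_le : (2 : ℝ) ^ ∑ i, r i ≤ Real.exp (Fintype.card τ * S) := by
    have two_le : (2 : ℝ) ≤ Real.exp 1 := by linarith [Real.add_one_le_exp (1 : ℝ)]
    calc (2 : ℝ) ^ ∑ i, r i ≤ Real.exp 1 ^ ∑ i, r i := by gcongr
      _ = Real.exp (∑ i, (r i : ℝ)) := by rw [← Real.exp_nat_mul, mul_one, Nat.cast_sum]
      _ ≤ Real.exp (Fintype.card τ * S) := by
        rw [← nsmul_eq_mul, Fintype.card]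
        exact Real.exp_le_exp.2 (sum_le_card_nsmul _ _ _ fun i _ => hr i)
  have entry_le (i l : Fin k) :
      l1Norm (hasseDeriv (μ i l) f) ≤ Real.exp ((Fintype.card τ + 1) * S) :=
    calc l1Norm (hasseDeriv (μ i l) f) ≤ 2 ^ (∑ i, r i) * l1Norm f := l1Norm_hasseDeriv_le hf _
      _ ≤ Real.exp (Fintype.card τ * S) * Real.exp S :=
        mul_le_mul two_pow_le hfS (l1Norm_nonneg f) (Real.exp_nonneg _)
      _ = Real.exp ((Fintype.card τ + 1) * S) := by rw [← Real.exp_add]; ring_nf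
  have factorial_le : (k.factorial : ℝ) ≤ Real.exp S ^ k :=
    (by exact_mod_cast Nat.factorial_le_pow k : (k.factorial : ℝ) ≤ (k : ℝ) ^ k).trans (by gcongr)
  calc _ ≤ k.factorial * Real.exp ((Fintype.card τ + 1) * S) ^ k := by
        simpa only [Fintype.card_fin] using
          l1Norm_det_le (M := Matrix.of fun i l => hasseDeriv (μ i l) f) entry_le
    _ ≤ Real.exp S ^ k * Real.exp ((Fintype.card τ + 1) * S) ^ k := by gcongr
    _ = _ := by rw [← mul_pow, ← Real.exp_add, ← Real.exp_nat_mul]; ring_nf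

section InductiveStep

variable {n k : ℕ} {σ L : ℝ} {r : Fin (n + 1) → ℕ} {ξ : Fin (n + 1) → ℚ}

lemma hasIndexGE_det_hasseDeriv_cons (hadm : IsAdmissible σ L r ξ) {η : ℝ} (hη : 0 < η)
    (hη1 : η ≤ 1) (hση : σ ≤ η / 2) {P : MvPolynomial (Fin (n + 1)) ℤ}
    (hP : HasIndexGE r η ξ P) (hk : k ≤ r 0 + 1) {μ : Fin k → Fin n →₀ ℕ}
    (hμ : ∀ i, (μ i).degree < k) :
    HasIndexGE r (k * η ^ 2 / 32) ξ
      (Matrix.of fun i l : Fin k => hasseDeriv (Finsupp.cons (l : ℕ) (μ i)) P).det := by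
  have hσ : 0 ≤ σ :=
    nonneg_of_mul_nonneg_left ((Nat.cast_nonneg _).trans (hadm.degree_le 0)) hadm.scale_pos
  have weight_le (i : Fin k) : relWeight (Fin.tail r) (μ i) ≤ σ :=
    relWeight_le_of_degree_le (hadm.degree_pos 0) hσ
      (fun j => hadm.degree_le_mul (Fin.succ_pos j)) (by have := hμ i; omega)
  refine HasIndexGE.mono (HasIndexGE.det (t := fun l : Fin k => max 0 (η / 2 - l / r 0))
    fun i l => ?_) ((le_of_eq (by ring)).trans
      (le_sum_max_sub_div (hadm.degree_pos 0) hk (half_pos hη) (by linarith)))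
  refine fun κ hκ => max_le (relWeight_nonneg r κ)
    ((hP.hasseDeriv (Finsupp.cons (l : ℕ) (μ i))).mono ?_ κ hκ)
  rw [relWeight_cons]
  linarith [weight_le i]

lemma exists_coeff_taylor_ne_zero_and_den_pow_le {T : Polynomial ℤ} (hT : T ≠ 0) (x : ℚ) :
    ∃ b, (Polynomial.taylor x (T.map (Int.castRingHom ℚ))).coeff b ≠ 0 ∧
      (x.den : ℝ) ^ b ≤ |(T.leadingCoeff : ℝ)| := by
  refine ⟨(T.map (Int.castRingHom ℚ)).rootMultiplicity x, ?_, ?_⟩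
  · rw [Polynomial.rootMultiplicity_eq_natTrailingDegree, ← Polynomial.taylor_apply]
    refine Polynomial.trailingCoeff_nonzero_iff_nonzero.2 ?_
    rw [Ne, Polynomial.taylor_eq_zero]
    exact (Polynomial.map_ne_zero_iff Int.cast_injective).2 hT
  · have h := Int.le_of_dvd (abs_pos.2 (Polynomial.leadingCoeff_ne_zero.2 hT))
      ((dvd_abs _ _).2 (den_pow_rootMultiplicity_dvd_leadingCoeff x T))
    exact_mod_cast h

variable {κ δ : ℝ} {W : MvPolynomial (Fin (n + 1)) ℤ} {V : MvPolynomial (Fin n) ℚ}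
  {U : Polynomial ℚ}

lemma RothLemma.exists_coeff_taylorAt_ne_zero (ih : RothLemma n δ σ)
    (hadm : IsAdmissible σ L r ξ) (hk : 0 < k) (hκσ : κ ≤ σ)
    (hWd : ∀ i, degreeOf i W ≤ k * r i) (hWn : l1Norm W ≤ Real.exp (k * (κ * L)))
    (hV : V ≠ 0) (hU : U ≠ 0) (hW : map (Int.castRingHom ℚ) W = sepMul V U) :
    ∃ a, coeff a (taylorAt (Fin.tail ξ) V) ≠ 0 ∧ relWeight (Fin.tail r) a < k * δ := by
  have hL := hadm.scale_pos
  have hslice := map_coeff_finSuccEquiv_eq_smul hW U.natDegree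
  have hlead : U.coeff U.natDegree ≠ 0 := Polynomial.leadingCoeff_ne_zero.2 hU
  have h := ih (hadm.nsmul_tail hk) (P := (finSuccEquiv ℤ n W).coeff U.natDegree)
    (fun h => smul_ne_zero hlead hV (by rw [← hslice, h, map_zero]))
    (fun i => (degreeOf_coeff_finSuccEquiv W i _).trans (hWd i.succ))
    ((l1Norm_coeff_finSuccEquiv_le W _).trans (hWn.trans (Real.exp_le_exp.2 (by
      rw [mul_left_comm σ]; gcongr))))
  simp only [HasIndexGE, not_forall, not_le] at h
  obtain ⟨a, ha, ha_lt⟩ := h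
  rw [← taylorAt_map_algebraMap, algebraMap_int_eq, hslice, map_smul, mem_support_iff,
    coeff_smul, smul_eq_mul] at ha
  rw [relWeight_nsmul, div_lt_iff₀' (Nat.cast_pos.2 hk)] at ha_lt
  exact ⟨a, right_ne_zero_of_mul ha, ha_lt⟩

lemma IsAdmissible.exists_coeff_taylor_ne_zero (hadm : IsAdmissible σ L r ξ) (hκ : 0 ≤ κ)
    (hWn : l1Norm W ≤ Real.exp (k * (κ * L))) (hV : V ≠ 0) (hU : U ≠ 0)
    (hW : map (Int.castRingHom ℚ) W = sepMul V U) :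
    ∃ b, (Polynomial.taylor (ξ 0) U).coeff b ≠ 0 ∧ (b : ℝ) / r 0 ≤ k * κ := by
  obtain ⟨a, ha⟩ := ne_zero_iff.1 hV
  obtain ⟨T, hTU, hT⟩ := exists_int_polynomial_map_eq_smul hW a
  have hT0 : T ≠ 0 := by
    rintro rfl
    exact smul_ne_zero ha hU (by rw [← hTU, Polynomial.map_zero])
  obtain ⟨b, hb, hb_le⟩ := exists_coeff_taylor_ne_zero_and_den_pow_le hT0 (ξ 0)
  rw [hTU, map_smul, Polynomial.coeff_smul, smul_eq_mul] at hb
  refine ⟨b, right_ne_zero_of_mul hb, ?_⟩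
  have hr0 : (0 : ℝ) < r 0 := Nat.cast_pos.2 (hadm.degree_pos 0)
  have hlog : 0 < Real.log (ξ 0).den :=
    pos_of_mul_pos_right (hadm.scale_pos.trans_le (hadm.scale_le 0)) hr0.le
  have pow_le : ((ξ 0).den : ℝ) ^ b ≤ Real.exp (k * (κ * L)) := by
    rw [Polynomial.leadingCoeff, hT] at hb_le
    exact hb_le.trans ((norm_coeff_le_l1Norm W _).trans hWn)
  rw [div_le_iff₀ hr0, ← mul_le_mul_iff_left₀ hlog]
  calc (b : ℝ) * Real.log (ξ 0).den ≤ k * (κ * L) := by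
        rw [← Real.log_pow, ← Real.log_exp (k * (κ * L))]
        exact Real.log_le_log (by have := (ξ 0).den_pos; positivity) pow_le
    _ ≤ k * (κ * (r 0 * Real.log (ξ 0).den)) := by
        have := hadm.scale_le 0
        gcongr
    _ = k * κ * r 0 * Real.log (ξ 0).den := by ring

lemma not_hasIndexGE_of_map_eq_sepMul (ih : RothLemma n δ σ) (hadm : IsAdmissible σ L r ξ)
    (hk : 0 < k) (hκ : 0 ≤ κ) (hκσ : κ ≤ σ) (hWd : ∀ i, degreeOf i W ≤ k * r i)
    (hWn : l1Norm W ≤ Real.exp (k * (κ * L))) (hV : V ≠ 0) (hU : U ≠ 0)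
    (hW : map (Int.castRingHom ℚ) W = sepMul V U) : ¬HasIndexGE r (k * (κ + δ)) ξ W := by
  obtain ⟨a, ha, ha_lt⟩ := ih.exists_coeff_taylorAt_ne_zero hadm hk hκσ hWd hWn hV hU hW
  obtain ⟨b, hb, hb_le⟩ := hadm.exists_coeff_taylor_ne_zero hκ hWn hV hU hW
  intro hind
  have h := hind (Finsupp.cons b a) (by
    rw [← taylorAt_map_algebraMap, algebraMap_int_eq, hW, taylorAt_sepMul, mem_support_iff,
      coeff_cons_sepMul]
    exact mul_ne_zero ha hb)
  rw [relWeight_cons] at h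
  linarith

end InductiveStep

lemma degreeOf_map_le {τ R S : Type*} [CommSemiring R] [CommSemiring S] (g : R →+* S) (i : τ)
    (f : MvPolynomial τ R) : degreeOf i (map g f) ≤ degreeOf i f :=
  degreeOf_le_iff.2 fun _ hν => degreeOf_le_iff.1 le_rfl _ (support_map_subset g f hν)

lemma RothLemma.succ {n : ℕ} {η σ : ℝ} (hη : 0 < η) (hη1 : η ≤ 1) (hσ : 0 < σ)
    (ih : RothLemma n (η ^ 2 / 128) σ) :
    RothLemma (n + 1) η (min σ (η ^ 2 / 128) / (n + 3)) := by
  set κ := min σ (η ^ 2 / 128)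
  have hκ0 : 0 < κ := lt_min hσ (by positivity)
  have hκ_le : κ / (n + 3) ≤ κ := div_le_self hκ0.le (by linarith [Nat.cast_nonneg (α := ℝ) n])
  intro r ξ L P hadm hP hPd hPn hind
  obtain ⟨k, hk, hkr, μ, hμ, V, U, hV, hU, hVU⟩ :=
    exists_det_hasseDeriv_cons_eq_sepMul (F := ℚ) (f := map (Int.castRingHom ℚ) P) (d := r 0)
      ((map_injective _ Int.cast_injective).ne_iff' (map_zero _) |>.2 hP)
      ((degreeOf_map_le _ _ _).trans (hPd 0))
  set M := Matrix.of fun i l : Fin k => hasseDeriv (Finsupp.cons (l : ℕ) (μ i)) P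
  have hW : map (Int.castRingHom ℚ) M.det = sepMul V U := by
    rw [← hVU, RingHom.map_det]
    congr 1
    ext1 i l
    exact (hasseDeriv_map _ _ P).symm
  have hk_exp : (k : ℝ) ≤ Real.exp (κ / (n + 3) * L) :=
    calc (k : ℝ) ≤ r 0 + 1 := by exact_mod_cast hkr
      _ ≤ Real.exp (r 0) := Real.add_one_le_exp _
      _ ≤ _ := Real.exp_le_exp.2 (hadm.degree_le 0)
  have hWn : l1Norm M.det ≤ Real.exp (k * (κ * L)) := by
    refine (l1Norm_det_hasseDeriv_le hPd hadm.degree_le hk_exp hPn _).trans_eq ?_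
    rw [Fintype.card_fin]
    congr 2
    push_cast
    field_simp
    ring
  have hWd (i : Fin (n + 1)) : degreeOf i M.det ≤ k * r i := by
    simpa only [Fintype.card_fin] using
      degreeOf_det_le (M := M) fun _ _ => (degreeOf_hasseDeriv_le _ i P).trans (hPd i)
  refine not_hasIndexGE_of_map_eq_sepMul ih (hadm.mono (hκ_le.trans (min_le_left _ _))) hk
    hκ0.le (min_le_left _ _) hWd hWn hV hU hW
    ((hasIndexGE_det_hasseDeriv_cons hadm hη hη1 ?_ hind hkr hμ).mono ?_)
  · have := hκ_le.trans (min_le_right _ _)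
    nlinarith
  · calc k * (κ + η ^ 2 / 128) ≤ k * (η ^ 2 / 128 + η ^ 2 / 128) := by
          gcongr
          exact min_le_right _ _
      _ ≤ k * η ^ 2 / 32 := by nlinarith [show 0 ≤ k * η ^ 2 by positivity]

theorem exists_rothLemma (n : ℕ) {η : ℝ} (hη : 0 < η) : ∃ σ, 0 < σ ∧ RothLemma n η σ := by
  induction n generalizing η with
  | zero =>
    refine ⟨1, one_pos, fun r ξ L P _ hP _ _ hind => ?_⟩
    have hne : taylorAt ξ P ≠ 0 := by
      rw [← taylorAt_map_algebraMap, Ne, map_eq_zero_iff _ (taylorAt_injective ξ)]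
      exact ((map_injective _ Int.cast_injective).ne_iff' (map_zero _)).2 hP
    obtain ⟨μ, hμ⟩ := support_nonempty.2 hne
    exact hη.not_ge (by simpa [relWeight_eq_sum] using hind μ hμ)
  | succ n ih =>
    have hη' : 0 < min η 1 := lt_min hη one_pos
    obtain ⟨σ, hσ, hn⟩ := ih (η := min η 1 ^ 2 / 128) (by positivity)
    refine ⟨min σ (min η 1 ^ 2 / 128) / (n + 3), by positivity,
      fun r ξ L P hadm hP hPd hPn hind => ?_⟩
    exact hn.succ hη' (min_le_right _ _) hσ hadm hP hPd hPn (hind.mono (min_le_left _ _))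

/-! ### Small integer solutions of linear equations over ℤ[α] -/

section Siegel

lemma sum_abs_sum_mul_le {ι κ R : Type*} [Fintype ι] [Fintype κ] [CommRing R] [LinearOrder R]
    [IsStrictOrderedRing R] (z : ι → R) {M : ι → κ → R} {C : R} (hM : ∀ j, ∑ i, |M j i| ≤ C) :
    ∑ i, |∑ j, z j * M j i| ≤ (∑ j, |z j|) * C :=
  calc ∑ i, |∑ j, z j * M j i| ≤ ∑ i, ∑ j, |z j| * |M j i| :=
        sum_le_sum fun i _ => by
          simpa only [abs_mul] using abs_sum_le_sum_abs (fun j => z j * M j i) univ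
    _ = ∑ j, |z j| * ∑ i, |M j i| := by rw [sum_comm]; simp only [mul_sum]
    _ ≤ ∑ j, |z j| * C := by gcongr with j; exact hM j
    _ = (∑ j, |z j|) * C := (sum_mul _ _ _).symm

lemma exists_int_coords_pow {A : Type*} [CommRing A] [Nontrivial A] {β : A}
    (hβ : IsIntegral ℤ β) :
    ∃ (d : ℕ) (θ : Fin d → A) (C : ℝ), 0 < d ∧ 0 ≤ C ∧ ∀ l : ℕ, ∃ z : Fin d → ℤ,
      ∑ i, (|z i| : ℝ) ≤ C ^ (l + 1) ∧ β ^ l = ∑ i, z i • θ i := by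
  obtain ⟨d, θ, hθ⟩ := Submodule.fg_iff_exists_fin_generating_family.1 hβ.fg_adjoin_singleton
  have exists_coords {x : A} (hx : x ∈ Algebra.adjoin ℤ {β}) : ∃ z : Fin d → ℤ,
      ∑ i, z i • θ i = x := by
    rwa [← Submodule.mem_span_range_iff_exists_fun, hθ, Subalgebra.mem_toSubmodule]
  have θ_mem (j : Fin d) : θ j ∈ Algebra.adjoin ℤ {β} := by
    rw [← Subalgebra.mem_toSubmodule, ← hθ]
    exact Submodule.subset_span ⟨j, rfl⟩
  obtain ⟨z₀, hz₀⟩ := exists_coords (one_mem _)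
  choose M hM using fun j =>
    exists_coords (mul_mem (Algebra.self_mem_adjoin_singleton ℤ β) (θ_mem j))
  set C : ℝ := ∑ i, (|z₀ i| : ℝ) + ∑ j, ∑ i, (|M j i| : ℝ) with hC
  have hM0 : 0 ≤ ∑ j, ∑ i, (|M j i| : ℝ) := by positivity
  have hz₀0 : 0 ≤ ∑ i, (|z₀ i| : ℝ) := by positivity
  refine ⟨d, θ, C, Nat.pos_of_ne_zero ?_, by linarith, fun l => ?_⟩
  · rintro rfl
    simp at hz₀
  induction l with
  | zero => exact ⟨z₀, by rw [zero_add, pow_one]; linarith, by rw [pow_zero, hz₀]⟩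
  | succ l ih =>
    obtain ⟨z, hz, hzβ⟩ := ih
    refine ⟨fun i => ∑ j, z j * M j i, ?_, ?_⟩
    · have row_le (j : Fin d) : ∑ i, (|M j i| : ℝ) ≤ C :=
        (single_le_sum (f := fun j => ∑ i, (|M j i| : ℝ)) (fun j _ => by positivity)
          (mem_univ j)).trans (by linarith)
      calc ∑ i, |((∑ j, z j * M j i : ℤ) : ℝ)| ≤ (∑ j, (|z j| : ℝ)) * C := by
            push_cast
            exact sum_abs_sum_mul_le _ row_le
        _ ≤ C ^ (l + 1) * C := by gcongr
    · rw [pow_succ', hzβ, mul_sum]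
      simp only [sum_smul, mul_smul_comm, ← hM, smul_sum, smul_smul]
      exact sum_comm

lemma exists_int_coords_mul_pow {α : ℝ} (hα : IsAlgebraic ℚ α) :
    ∃ (d : ℕ) (a : ℤ) (θ : Fin d → ℝ) (C : ℝ), 0 < d ∧ a ≠ 0 ∧ 1 ≤ C ∧
      ∀ Λ, ∀ l ≤ Λ, ∃ z : Fin d → ℤ, (∀ i, (|z i| : ℝ) ≤ C ^ (Λ + 1)) ∧
        a ^ Λ * α ^ l = ∑ i, z i * θ i := by
  obtain ⟨a, ha, hint⟩ :=
    ((IsFractionRing.isAlgebraic_iff ℤ ℚ ℝ).2 hα).exists_integral_multiple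
  obtain ⟨d, θ, C, hd, hC0, hpow⟩ := exists_int_coords_pow hint
  set D : ℝ := max C |(a : ℝ)|
  have ha1 : 1 ≤ |(a : ℝ)| := by exact_mod_cast Int.one_le_abs ha
  refine ⟨d, a, θ, D, hd, ha, ha1.trans (le_max_right _ _), fun Λ l hl => ?_⟩
  obtain ⟨m, rfl⟩ := Nat.exists_eq_add_of_le hl
  obtain ⟨z, hz, hzα⟩ := hpow l
  refine ⟨fun i => a ^ m * z i, fun i => ?_, ?_⟩
  · have hzi : (|z i| : ℝ) ≤ D ^ (l + 1) :=
      calc (|z i| : ℝ) ≤ ∑ i, (|z i| : ℝ) :=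
            single_le_sum (f := fun i => (|z i| : ℝ)) (fun _ _ => abs_nonneg _) (mem_univ i)
        _ ≤ C ^ (l + 1) := hz
        _ ≤ D ^ (l + 1) := by gcongr; exact le_max_left _ _
    calc |((a ^ m * z i : ℤ) : ℝ)| = |(a : ℝ)| ^ m * |(z i : ℝ)| := by
          push_cast
          rw [abs_mul, abs_pow]
      _ ≤ D ^ m * D ^ (l + 1) := by gcongr; exact le_max_right _ _
      _ = D ^ (l + m + 1) := by ring
  · simp only [zsmul_eq_mul, mul_pow] at hzα
    push_cast
    simp only [mul_assoc, ← mul_sum, ← hzα]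
    ring

open scoped Matrix.Norms.Elementwise in
lemma exists_int_solution_le {ι κ : Type*} [Fintype ι] [Fintype κ] (A : Matrix ι κ ℤ) {B : ℝ}
    (hB : 1 ≤ B) (hA : ∀ i j, (|A i j| : ℝ) ≤ B) (hι : 0 < Fintype.card ι)
    (hκ : 2 * Fintype.card ι ≤ Fintype.card κ) :
    ∃ x : κ → ℤ, x ≠ 0 ∧ A.mulVec x = 0 ∧ ∀ j, (|x j| : ℝ) ≤ Fintype.card κ * B := by
  obtain ⟨x, hx0, hx, hx_le⟩ := Int.Matrix.exists_ne_zero_int_vec_norm_le A (by omega) hι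
  refine ⟨x, hx0, hx, fun j => ?_⟩
  have hAB : ‖A‖ ≤ B := (Matrix.norm_le_iff (by linarith)).2 fun i j => by
    simpa only [Int.norm_eq_abs] using hA i j
  have hι' : (1 : ℝ) ≤ Fintype.card ι := by exact_mod_cast hι
  have hκ' : 2 * (Fintype.card ι : ℝ) ≤ Fintype.card κ := by exact_mod_cast hκ
  have one_le : (1 : ℝ) ≤ Fintype.card κ * max 1 ‖A‖ :=
    one_le_mul_of_one_le_of_one_le (by linarith) (le_max_left _ _)
  calc (|x j| : ℝ) = ‖x j‖ := (Int.norm_eq_abs _).symm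
    _ ≤ ‖x‖ := norm_le_pi_norm x j
    _ ≤ (Fintype.card κ * max 1 ‖A‖) ^ (1 : ℝ) := hx_le.trans
      (Real.rpow_le_rpow_of_exponent_le one_le ((div_le_one (by linarith)).2 (by linarith)))
    _ = Fintype.card κ * max 1 ‖A‖ := Real.rpow_one _
    _ ≤ Fintype.card κ * B := by gcongr; exact max_le hB hAB

lemma exists_int_solution_of_isAlgebraic {α : ℝ} (hα : IsAlgebraic ℚ α) :
    ∃ (d : ℕ) (C : ℝ), 1 ≤ C ∧ ∀ {ι κ : Type} [Fintype ι] [Fintype κ] {Λ : ℕ} {B : ℝ}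
      (c : ι → κ → ℤ) (e : ι → κ → ℕ), 1 ≤ B → (∀ i j, (|c i j| : ℝ) ≤ B) → (∀ i j, e i j ≤ Λ) →
      0 < Fintype.card ι → 2 * (Fintype.card ι * d) ≤ Fintype.card κ →
      ∃ x : κ → ℤ, x ≠ 0 ∧ (∀ j, (|x j| : ℝ) ≤ Fintype.card κ * (B * C ^ (Λ + 1))) ∧
        ∀ i, ∑ j, x j * (c i j * α ^ e i j) = 0 := by
  obtain ⟨d, a, θ, C, hd, ha, hC, hcoords⟩ := exists_int_coords_mul_pow hα
  refine ⟨d, C, hC, fun {ι κ} _ _ {Λ B} c e hB hc he hι hκ => ?_⟩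
  choose z hz hzα using fun i j => hcoords Λ (e i j) (he i j)
  let A : Matrix (ι × Fin d) κ ℤ := fun p j => c p.1 j * z p.1 j p.2
  obtain ⟨x, hx0, hAx, hx⟩ := exists_int_solution_le A (B := B * C ^ (Λ + 1))
    (one_le_mul_of_one_le_of_one_le hB (one_le_pow₀ hC))
    (fun p j => by
      simp only [A, Int.cast_mul, abs_mul]
      exact mul_le_mul (hc _ _) (hz _ _ _) (abs_nonneg _) (by linarith))
    (by simpa using ⟨hι, hd⟩) (by simpa using hκ)
  refine ⟨x, hx0, hx, fun i => (mul_eq_zero_iff_left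
    (pow_ne_zero Λ (Int.cast_ne_zero.2 ha : (a : ℝ) ≠ 0))).1 ?_⟩
  have row_eq_zero (l : Fin d) : ∑ j, (c i j * z i j l * x j : ℝ) = 0 := by
    exact_mod_cast congr_fun hAx (i, l)
  calc (a : ℝ) ^ Λ * ∑ j, x j * (c i j * α ^ e i j)
      = ∑ j, x j * c i j * (a ^ Λ * α ^ e i j) := by
        rw [mul_sum]; exact sum_congr rfl fun j _ => by ring
    _ = ∑ j, ∑ l, θ l * (c i j * z i j l * x j) := by
        refine sum_congr rfl fun j _ => ?_
        rw [hzα, mul_sum]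
        exact sum_congr rfl fun l _ => by ring
    _ = ∑ l, θ l * ∑ j, (c i j * z i j l * x j : ℝ) := by
        rw [sum_comm]; simp only [mul_sum]
    _ = 0 := by simp only [row_eq_zero, mul_zero, sum_const_zero]

end Siegel

/-! ### The auxiliary polynomial -/

section Box

variable {σ : Type*} [Fintype σ] {r : σ → ℕ}

/-- The multi-indices `μ ≤ r`, i.e. the exponents of the monomials of partial degrees at most
`r`. -/
def box (r : σ → ℕ) : Finset (σ →₀ ℕ) :=
  open Classical in
  (Fintype.piFinset fun i => range (r i + 1)).map Finsupp.equivFunOnFinite.symm.toEmbedding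

lemma mem_box {μ : σ →₀ ℕ} : μ ∈ box r ↔ ∀ i, μ i ≤ r i := by
  simp [box, mem_map_equiv, Fintype.mem_piFinset]

lemma card_box : #(box r) = ∏ i, (r i + 1) := by simp [box]

lemma card_box_le_two_pow : #(box r) ≤ 2 ^ ∑ i, r i := by
  rw [card_box, ← prod_pow_eq_pow_sum]
  exact prod_le_prod' fun i _ => Nat.lt_two_pow_self

lemma support_taylorAt_subset_box {R A : Type*} [CommRing R] [CommRing A] [Algebra R A]
    {f : MvPolynomial σ R} (hf : f.support ⊆ box r) (a : σ → A) :
    (taylorAt a f).support ⊆ box r := by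
  intro μ hμ
  rw [mem_support_iff, coeff_taylorAt] at hμ
  obtain ⟨ν, hν, hne⟩ := exists_ne_zero_of_sum_ne_zero hμ
  have hμν : μ ≤ ν := by
    by_contra h
    rw [prodChoose_eq_zero h] at hne
    simp at hne
  exact mem_box.2 fun i => (hμν i).trans (mem_box.1 (hf hν) i)

lemma sum_exp_mul_half_sub_div_le {r : ℕ} (hr : 0 < r) (t : ℝ) :
    ∑ j ∈ range (r + 1), Real.exp (t * (1 / 2 - j / r)) ≤ (r + 1) * Real.exp (t ^ 2 / 8) := by
  have hr' : (0 : ℝ) < r := Nat.cast_pos.2 hr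
  have sum_neg : ∑ j ∈ range (r + 1), Real.exp (t * (1 / 2 - j / r)) =
      ∑ j ∈ range (r + 1), Real.exp (-(t * (1 / 2 - j / r))) := by
    rw [← sum_range_reflect]
    refine sum_congr rfl fun j hj => ?_
    rw [add_tsub_cancel_right, Nat.cast_sub (Nat.lt_succ_iff.1 (mem_range.1 hj))]
    congr 1
    field_simp
    ring
  have cosh_le : ∀ j ∈ range (r + 1),
      Real.cosh (t * (1 / 2 - j / r)) ≤ Real.exp (t ^ 2 / 8) := fun j hj => by
    refine (Real.cosh_le_exp_half_sq _).trans (Real.exp_le_exp.2 ?_)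
    have h0 : 0 ≤ (j : ℝ) / r := by positivity
    have h1 : (j : ℝ) / r ≤ 1 := by
      rw [div_le_one hr']
      exact_mod_cast Nat.lt_succ_iff.1 (mem_range.1 hj)
    nlinarith [mul_nonneg (sq_nonneg t) (mul_nonneg h0 (sub_nonneg.2 h1))]
  calc ∑ j ∈ range (r + 1), Real.exp (t * (1 / 2 - j / r))
      = ∑ j ∈ range (r + 1), Real.cosh (t * (1 / 2 - j / r)) := by
        simp only [Real.cosh_eq]
        rw [← sum_div, sum_add_distrib, ← sum_neg, add_self_div_two]
    _ ≤ #(range (r + 1)) • Real.exp (t ^ 2 / 8) := sum_le_card_nsmul _ _ _ cosh_le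
    _ = (r + 1) * Real.exp (t ^ 2 / 8) := by rw [card_range, nsmul_eq_mul]; push_cast; rfl

lemma sum_box_exp_le (hr : ∀ i, 0 < r i) (t : ℝ) :
    ∑ μ ∈ box r, Real.exp (t * (Fintype.card σ / 2 - relWeight r μ)) ≤
      #(box r) * Real.exp (Fintype.card σ * (t ^ 2 / 8)) := by
  classical
  have exp_eq (μ : σ →₀ ℕ) : Real.exp (t * (Fintype.card σ / 2 - relWeight r μ)) =
      ∏ i, Real.exp (t * (1 / 2 - μ i / r i)) := by
    rw [← Real.exp_sum, ← mul_sum, sum_sub_distrib, relWeight_eq_sum]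
    simp [div_eq_mul_inv]
  calc ∑ μ ∈ box r, Real.exp (t * (Fintype.card σ / 2 - relWeight r μ))
      = ∏ i, ∑ j ∈ range (r i + 1), Real.exp (t * (1 / 2 - j / r i)) := by
        rw [prod_univ_sum, box, sum_map]
        simp only [exp_eq]
        refine sum_congr (by congr!) fun p _ => rfl
    _ ≤ ∏ i, ((r i + 1) * Real.exp (t ^ 2 / 8)) :=
        prod_le_prod (fun i _ => by positivity) fun i _ => sum_exp_mul_half_sub_div_le (hr i) t
    _ = #(box r) * Real.exp (Fintype.card σ * (t ^ 2 / 8)) := by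
        rw [prod_mul_distrib, prod_const, card_univ, ← Real.exp_nat_mul, card_box]
        push_cast
        rfl

lemma card_filter_relWeight_lt_le (hr : ∀ i, 0 < r i) {δ : ℝ} (hδ : 0 ≤ δ) :
    (#{μ ∈ box r | relWeight r μ < Fintype.card σ * (1 / 2 - δ)} : ℝ) *
      Real.exp (2 * δ ^ 2 * Fintype.card σ) ≤ #(box r) := by
  set m : ℝ := (Fintype.card σ : ℝ)
  set S := {μ ∈ box r | relWeight r μ < m * (1 / 2 - δ)}
  have term_ge : ∀ μ ∈ S, Real.exp (4 * δ ^ 2 * m) ≤ Real.exp (4 * δ * (m / 2 - relWeight r μ)) :=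
    fun μ hμ => Real.exp_le_exp.2 (by nlinarith [(mem_filter.1 hμ).2])
  have chernoff : #S * Real.exp (4 * δ ^ 2 * m) ≤ #(box r) * Real.exp (m * ((4 * δ) ^ 2 / 8)) :=
    calc #S * Real.exp (4 * δ ^ 2 * m) = #S • Real.exp (4 * δ ^ 2 * m) := (nsmul_eq_mul _ _).symm
      _ ≤ ∑ μ ∈ S, Real.exp (4 * δ * (m / 2 - relWeight r μ)) := card_nsmul_le_sum _ _ _ term_ge
      _ ≤ ∑ μ ∈ box r, Real.exp (4 * δ * (m / 2 - relWeight r μ)) :=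
        sum_le_sum_of_subset_of_nonneg (filter_subset _ _) fun _ _ _ => Real.exp_nonneg _
      _ ≤ _ := sum_box_exp_le hr (4 * δ)
  refine le_of_mul_le_mul_right ?_ (Real.exp_pos (2 * δ ^ 2 * m))
  rw [mul_assoc]
  calc #S * (Real.exp (2 * δ ^ 2 * m) * Real.exp (2 * δ ^ 2 * m))
      = #S * Real.exp (4 * δ ^ 2 * m) := by rw [← Real.exp_add]; ring_nf
    _ ≤ #(box r) * Real.exp (m * ((4 * δ) ^ 2 / 8)) := chernoff
    _ = #(box r) * Real.exp (2 * δ ^ 2 * m) := by ring_nf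

end Box

lemma exists_support_subset_coeff_eq {σ R : Type*} [CommSemiring R] (s : Finset (σ →₀ ℕ))
    (x : s → R) : ∃ f : MvPolynomial σ R, f.support ⊆ s ∧ ∀ ν : s, coeff ν f = x ν := by
  classical
  refine ⟨∑ ν : s, monomial ν (x ν), fun κ hκ => ?_, fun ν => ?_⟩
  · obtain ⟨ν, -, hν⟩ := mem_biUnion.1 (support_sum hκ)
    rw [mem_singleton.1 (support_monomial_subset hν)]
    exact ν.2
  · simp [coeff_sum, coeff_monomial]

lemma l1Norm_le_card_mul {σ R : Type*} [NormedCommRing R] {f : MvPolynomial σ R}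
    {s : Finset (σ →₀ ℕ)} {B : ℝ} (hf : f.support ⊆ s) (hB : ∀ ν ∈ s, ‖coeff ν f‖ ≤ B) :
    l1Norm f ≤ #s * B := by
  rw [l1Norm_eq_sum hf, ← nsmul_eq_mul]
  exact sum_le_card_nsmul _ _ _ hB

lemma exists_polynomial_coeff_taylorAt_eq_zero {α : ℝ} (hα : IsAlgebraic ℚ α) :
    ∃ (d : ℕ) (E : ℝ), 1 ≤ E ∧ ∀ {σ : Type} [Fintype σ] (r : σ → ℕ) (S : Finset (σ →₀ ℕ)),
      S.Nonempty → 2 * (#S * d) ≤ #(box r) → ∃ P : MvPolynomial σ ℤ, P ≠ 0 ∧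
        P.support ⊆ box r ∧ l1Norm P ≤ E ^ (∑ h, r h + 1) ∧
        ∀ μ ∈ S, coeff μ (taylorAt (fun _ => α) P) = 0 := by
  obtain ⟨d, C, hC, hsolve⟩ := exists_int_solution_of_isAlgebraic hα
  refine ⟨d, 8 * C, by linarith, fun r S hS hcard => ?_⟩
  set Λ := ∑ h, r h
  have choose_le (μ : S) (ν : box r) : |((prodChoose ν.1 μ.1 : ℤ) : ℝ)| ≤ 2 ^ Λ := by
    have h : prodChoose ν.1 μ.1 ≤ 2 ^ Λ := prodChoose_le_two_pow (mem_box.1 ν.2)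
    simpa using mod_cast h
  obtain ⟨x, hx0, hx, hxS⟩ := hsolve (Λ := Λ) (fun (μ : S) (ν : box r) => (prodChoose ν.1 μ.1 : ℤ))
    (fun μ ν => ∑ i, (ν.1 i - μ.1 i)) (one_le_pow₀ one_le_two) choose_le
    (fun μ ν => sum_le_sum fun i _ => (Nat.sub_le _ _).trans (mem_box.1 ν.2 i))
    (by simpa using hS) (by simpa using hcard)
  obtain ⟨P, hPr, hPx⟩ := exists_support_subset_coeff_eq (box r) x
  refine ⟨P, ?_, hPr, ?_, fun μ hμ => ?_⟩
  · rintro rfl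
    exact hx0 (funext fun ν => by rw [← hPx, coeff_zero]; rfl)
  · rw [Fintype.card_coe] at hx
    have card_le : (#(box r) : ℝ) ≤ 2 ^ Λ := by exact_mod_cast card_box_le_two_pow
    calc l1Norm P ≤ #(box r) * (#(box r) * (2 ^ Λ * C ^ (Λ + 1))) :=
          l1Norm_le_card_mul hPr fun ν hν => by
            rw [Int.norm_eq_abs, hPx ⟨ν, hν⟩]
            exact hx _
      _ ≤ 2 ^ Λ * (2 ^ Λ * (2 ^ Λ * C ^ (Λ + 1))) := by gcongr
      _ = 8 ^ Λ * C ^ (Λ + 1) := by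
        rw [show (8 : ℝ) = 2 * 2 * 2 by norm_num, mul_pow, mul_pow]
        ring
      _ ≤ 8 ^ (Λ + 1) * C ^ (Λ + 1) := by gcongr <;> norm_num
      _ = (8 * C) ^ (Λ + 1) := (mul_pow _ _ _).symm
  · rw [coeff_taylorAt, ← hxS ⟨μ, hμ⟩, sum_subset hPr fun ν _ hν => by
      rw [notMem_support_iff.1 hν, map_zero, zero_mul], ← sum_coe_sort]
    refine sum_congr rfl fun ν _ => ?_
    rw [hPx, prod_pow_eq_pow_sum]
    push_cast
    rfl

lemma exists_auxiliary_polynomial {α : ℝ} (hα : IsAlgebraic ℚ α) {δ : ℝ} (hδ : 0 < δ)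
    (hδ1 : δ < 1 / 2) :
    ∃ (m : ℕ) (E : ℝ), 0 < m ∧ 1 ≤ E ∧ ∀ r : Fin m → ℕ, (∀ h, 0 < r h) →
      ∃ P : MvPolynomial (Fin m) ℤ, P ≠ 0 ∧ (∀ i, degreeOf i P ≤ r i) ∧
        l1Norm P ≤ E ^ (∑ h, r h + 1) ∧ HasIndexGE r (m * (1 / 2 - δ)) (fun _ => α) P := by
  obtain ⟨d, E, hE, hpoly⟩ := exists_polynomial_coeff_taylorAt_eq_zero hα
  obtain ⟨m, hm⟩ := exists_nat_gt (2 * d / (2 * δ ^ 2) : ℝ)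
  have hm0 : (0 : ℝ) < m := hm.trans_le' (by positivity)
  have two_mul_d_le : (2 * d : ℝ) ≤ Real.exp (2 * δ ^ 2 * m) := by
    rw [div_lt_iff₀ (by positivity)] at hm
    linarith [Real.add_one_le_exp (2 * δ ^ 2 * m)]
  refine ⟨m, E, Nat.cast_pos.1 hm0, hE, fun r hr => ?_⟩
  let S := {μ ∈ box r | relWeight r μ < m * (1 / 2 - δ)}
  have zero_mem : 0 ∈ S := mem_filter.2
    ⟨mem_box.2 fun i => Nat.zero_le _, by rw [map_zero]; exact mul_pos hm0 (by linarith)⟩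
  have card_S : 2 * (#S * d) ≤ #(box r) := by
    have card_mul_le := card_filter_relWeight_lt_le hr hδ.le
    rw [Fintype.card_fin] at card_mul_le
    have : (2 * (#S * d) : ℝ) ≤ #(box r) :=
      calc (2 * (#S * d) : ℝ) = #S * (2 * d) := by ring
        _ ≤ #S * Real.exp (2 * δ ^ 2 * m) := by gcongr
        _ ≤ #(box r) := card_mul_le
    exact_mod_cast this
  obtain ⟨P, hP0, hPr, hPE, hPS⟩ := hpoly r S ⟨0, zero_mem⟩ card_S
  refine ⟨P, hP0, fun i => degreeOf_le_iff.2 fun ν hν => mem_box.1 (hPr hν) i, hPE,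
    fun μ hμ => ?_⟩
  by_contra! hlt
  exact mem_support_iff.1 hμ
    (hPS μ (mem_filter.2 ⟨support_taylorAt_subset_box hPr _ hμ, hlt⟩))

/-! ### The index at rational approximations -/

section Transfer

variable {σ R : Type*} [Fintype σ] {r : σ → ℕ}

lemma one_le_abs_coeff_taylorAt_mul {P : MvPolynomial σ ℤ} (hP : ∀ i, degreeOf i P ≤ r i)
    {ξ : σ → ℚ} {μ : σ →₀ ℕ} (hμ : μ ∈ (taylorAt ξ P).support) :
    1 ≤ |coeff μ (taylorAt ξ P)| * ∏ i, ((ξ i).den : ℚ) ^ r i := by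
  have pow_mul_den_pow (i : σ) {k : ℕ} (hk : k ≤ r i) :
      ξ i ^ k * ((ξ i).den : ℚ) ^ r i = (ξ i).num ^ k * ((ξ i).den : ℚ) ^ (r i - k) := by
    rw [← Nat.add_sub_cancel' hk, pow_add, ← mul_assoc, ← mul_pow, Rat.mul_den_eq_num,
      Nat.add_sub_cancel_left]
  obtain ⟨z, hz⟩ : ∃ z : ℤ, coeff μ (taylorAt ξ P) * ∏ i, ((ξ i).den : ℚ) ^ r i = z := by
    refine ⟨∑ ν ∈ P.support, coeff ν P * (prodChoose ν μ *
      ∏ i, ((ξ i).num ^ (ν i - μ i) * (ξ i).den ^ (r i - (ν i - μ i)))), ?_⟩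
    rw [coeff_taylorAt, sum_mul]
    push_cast
    refine sum_congr rfl fun ν hν => ?_
    rw [mul_assoc, mul_assoc, ← prod_mul_distrib, eq_intCast]
    refine congr_arg _ (congr_arg _ (prod_congr rfl fun i _ => pow_mul_den_pow i ?_))
    exact (Nat.sub_le _ _).trans (degreeOf_le_iff.1 (hP i) ν hν)
  have hprod : 0 < ∏ i, ((ξ i).den : ℚ) ^ r i :=
    prod_pos fun i _ => pow_pos (Nat.cast_pos.2 (ξ i).den_pos) _
  have hz0 : z ≠ 0 := by
    rintro rfl
    rw [Int.cast_zero] at hz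
    exact mul_ne_zero (mem_support_iff.1 hμ) hprod.ne' hz
  rw [← abs_of_pos hprod, ← abs_mul, hz]
  exact_mod_cast Int.one_le_abs hz0

lemma ratCast_coeff_taylorAt {τ : Type*} (ξ : τ → ℚ) (P : MvPolynomial τ ℤ) (μ : τ →₀ ℕ) :
    ((coeff μ (taylorAt ξ P) : ℚ) : ℝ) = coeff μ (taylorAt (fun i => (ξ i : ℝ)) P) := by
  rw [← eq_ratCast (Rat.castHom ℝ), ← coeff_map]
  exact congr_arg (coeff μ) (map_taylorAt (Rat.castHom ℝ).toIntAlgHom ξ P)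

lemma abs_coeff_taylorAt_le {P : MvPolynomial σ ℤ} (hP : ∀ i, degreeOf i P ≤ r i) {a : σ → ℝ}
    {B : ℝ} (hB : 1 ≤ B) (ha : ∀ i, |a i| ≤ B) (μ : σ →₀ ℕ) :
    |coeff μ (taylorAt a P)| ≤ (2 * B) ^ (∑ i, r i) * l1Norm P := by
  have : 0 ≤ B := by linarith
  rw [coeff_taylorAt, l1Norm, mul_sum]
  refine (abs_sum_le_sum_abs _ _).trans (sum_le_sum fun ν hν => ?_)
  have hν' (i : σ) : ν i ≤ r i := degreeOf_le_iff.1 (hP i) ν hν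
  have hchoose : (prodChoose ν μ : ℝ) ≤ 2 ^ ∑ i, r i := by
    exact_mod_cast prodChoose_le_two_pow hν'
  have hpow : |∏ i, a i ^ (ν i - μ i)| ≤ B ^ ∑ i, r i := by
    rw [abs_prod, ← prod_pow_eq_pow_sum]
    refine prod_le_prod (fun _ _ => abs_nonneg _) fun i _ => ?_
    rw [abs_pow]
    calc |a i| ^ (ν i - μ i) ≤ B ^ (ν i - μ i) := by gcongr; exact ha i
      _ ≤ B ^ r i := pow_le_pow_right₀ hB ((Nat.sub_le _ _).trans (hν' i))
  rw [abs_mul, abs_mul, Nat.abs_cast, mul_comm, mul_pow, Int.norm_eq_abs, eq_intCast]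
  gcongr

lemma prodChoose_mul_prod_abs_pow_le {ν μ : σ →₀ ℕ} (hν : ∀ i, ν i ≤ r i) {b : σ → ℝ} {c : ℝ}
    (hb : ∀ i, |b i| ≤ Real.exp (-c / r i)) :
    prodChoose ν μ * ∏ i, |b i| ^ (ν i - μ i) ≤
      2 ^ (∑ i, r i) * Real.exp (-c * (relWeight r ν - relWeight r μ)) := by
  by_cases hμν : μ ≤ ν
  · have hchoose : (prodChoose ν μ : ℝ) ≤ 2 ^ ∑ i, r i := by
      exact_mod_cast prodChoose_le_two_pow hν
    gcongr
    calc ∏ i, |b i| ^ (ν i - μ i) ≤ ∏ i, Real.exp (-c / r i) ^ (ν i - μ i) := by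
          gcongr with i
          exact hb i
      _ = Real.exp (-c * (relWeight r ν - relWeight r μ)) := by
        simp only [← Real.exp_nat_mul, ← Real.exp_sum, relWeight_eq_sum, ← sum_sub_distrib,
          mul_sum]
        refine congr_arg _ (sum_congr rfl fun i _ => ?_)
        rw [Nat.cast_sub (hμν i)]
        ring
  · rw [prodChoose_eq_zero hμν, Nat.cast_zero, zero_mul]
    positivity

lemma HasIndexGE.abs_coeff_taylorAt_le [CommRing R] [Algebra R ℝ] {f : MvPolynomial σ R}
    {t : ℝ} {a x : σ → ℝ} (hf : HasIndexGE r t a f) (hfr : ∀ i, degreeOf i f ≤ r i) {B : ℝ}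
    (hB : ∀ ν, |coeff ν (taylorAt a f)| ≤ B) {c : ℝ} (hc : 0 ≤ c)
    (hx : ∀ i, |x i - a i| ≤ Real.exp (-c / r i)) (μ : σ →₀ ℕ) :
    |coeff μ (taylorAt x f)| ≤
      4 ^ (∑ i, r i) * B * Real.exp (-c * (t - relWeight r μ)) := by
  have hB0 : 0 ≤ B := (abs_nonneg _).trans (hB 0)
  have support_subset : (taylorAt a f).support ⊆ box r :=
    support_taylorAt_subset_box (fun ν hν => mem_box.2 fun i => degreeOf_le_iff.1 (hfr i) ν hν) a
  have card_le : (#(taylorAt a f).support : ℝ) ≤ 2 ^ ∑ i, r i := by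
    exact_mod_cast (card_le_card support_subset).trans card_box_le_two_pow
  have term_le : ∀ ν ∈ (taylorAt a f).support,
      |algebraMap ℝ ℝ (coeff ν (taylorAt a f)) *
          (prodChoose ν μ * ∏ i, (x - a) i ^ (ν i - μ i))| ≤
        B * (2 ^ (∑ i, r i) * Real.exp (-c * (t - relWeight r μ))) := fun ν hν => by
    simp only [Algebra.algebraMap_self_apply, abs_mul, Nat.abs_cast, abs_prod, abs_pow]
    refine mul_le_mul (hB ν) ((prodChoose_mul_prod_abs_pow_le (mem_box.1 (support_subset hν))
      hx).trans ?_) (by positivity) hB0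
    have := hf ν hν
    gcongr 2 ^ (∑ i, r i) * Real.exp ?_
    nlinarith
  calc |coeff μ (taylorAt x f)|
      = |coeff μ (taylorAt (x - a) (taylorAt a f))| := by
        rw [← taylorAt_add, add_sub_cancel]
    _ ≤ #(taylorAt a f).support • (B * (2 ^ (∑ i, r i) * Real.exp (-c * (t - relWeight r μ)))) := by
        rw [coeff_taylorAt]
        exact (abs_sum_le_sum_abs _ _).trans (sum_le_card_nsmul _ _ _ term_le)
    _ ≤ 2 ^ (∑ i, r i) * (B * (2 ^ (∑ i, r i) * Real.exp (-c * (t - relWeight r μ)))) := by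
        rw [nsmul_eq_mul]
        gcongr
    _ = 4 ^ (∑ i, r i) * B * Real.exp (-c * (t - relWeight r μ)) := by
        rw [show (4 : ℝ) = 2 * 2 by norm_num, mul_pow]
        ring

lemma HasIndexGE.abs_coeff_taylorAt_le_pow {P : MvPolynomial σ ℤ} {α t : ℝ} {x : σ → ℝ}
    (hP : HasIndexGE r t (fun _ => α) P) (hPr : ∀ i, degreeOf i P ≤ r i) {E : ℝ} (hE : 0 ≤ E)
    (hPE : l1Norm P ≤ E ^ (∑ i, r i + 1)) {c : ℝ} (hc : 0 ≤ c)
    (hx : ∀ i, |x i - α| ≤ Real.exp (-c / r i)) (μ : σ →₀ ℕ) :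
    |coeff μ (taylorAt x P)| ≤
      (8 * (1 + |α|) * E) ^ (∑ i, r i + 1) * Real.exp (-c * (t - relWeight r μ)) := by
  set Λ := ∑ i, r i
  have hα := abs_nonneg α
  have coeff_le (ν : σ →₀ ℕ) :
      |coeff ν (taylorAt (fun _ => α) P)| ≤ (2 * (1 + |α|)) ^ Λ * E ^ (Λ + 1) :=
    (Roth.abs_coeff_taylorAt_le hPr (by linarith : 1 ≤ 1 + |α|) (fun _ => by linarith) ν).trans
      (mul_le_mul_of_nonneg_left hPE (by positivity))
  refine (hP.abs_coeff_taylorAt_le hPr coeff_le hc hx μ).trans ?_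
  gcongr
  calc (4 : ℝ) ^ Λ * ((2 * (1 + |α|)) ^ Λ * E ^ (Λ + 1))
      = (8 * (1 + |α|)) ^ Λ * E ^ (Λ + 1) := by
        rw [← mul_assoc, ← mul_pow]
        ring
    _ ≤ (8 * (1 + |α|)) ^ (Λ + 1) * E ^ (Λ + 1) := by
        gcongr
        · linarith
        · exact Nat.le_succ _
    _ = (8 * (1 + |α|) * E) ^ (Λ + 1) := (mul_pow _ _ _).symm

end Transfer

lemma exists_forall_pow_sum_le_exp (n : ℕ) {E κ : ℝ} (hE : 1 ≤ E) (hκ : 0 < κ) :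
    ∃ s, 0 < s ∧ ∀ {L : ℝ} {r : Fin n → ℕ}, (∀ h, (r h : ℝ) ≤ s * L) → 1 ≤ s * L →
      E ^ (∑ h, r h + 1) ≤ Real.exp (κ * L) := by
  have hlog : 0 ≤ Real.log E := Real.log_nonneg hE
  refine ⟨κ / ((n + 1) * (Real.log E + 1)), by positivity, fun {L r} hr hL => ?_⟩
  set s := κ / ((n + 1) * (Real.log E + 1)) with hs
  have degree_sum_le : ((∑ h, r h : ℕ) : ℝ) + 1 ≤ (n + 1) * (s * L) := by
    have := sum_le_card_nsmul univ (fun h => (r h : ℝ)) _ fun h _ => hr h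
    rw [card_univ, Fintype.card_fin, nsmul_eq_mul, ← Nat.cast_sum] at this
    linarith
  calc E ^ (∑ h, r h + 1) = Real.exp (((∑ h, r h : ℕ) + 1) * Real.log E) := by
        rw [← Real.exp_log (pow_pos (by linarith) _), Real.log_pow]
        push_cast
        rfl
    _ ≤ Real.exp ((n + 1) * (s * L) * (Real.log E + 1)) := by
        gcongr
        linarith
    _ = Real.exp (κ * L) := by
        rw [hs]
        field_simp

lemma abs_sub_le_exp_of_le_den_rpow {α ε L : ℝ} (hε : 0 ≤ ε) {ξ : ℚ} {k : ℕ} (hk : 0 < k)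
    (hξ : |α - ξ| ≤ (ξ.den : ℝ) ^ (-(2 + ε))) (hL : L ≤ k * Real.log ξ.den) :
    |ξ - α| ≤ Real.exp (-((2 + ε) * L) / k) := by
  rw [abs_sub_comm]
  refine hξ.trans ?_
  rw [Real.rpow_def_of_pos (Nat.cast_pos.2 ξ.den_pos), Real.exp_le_exp,
    le_div_iff₀ (Nat.cast_pos.2 hk)]
  nlinarith

lemma prod_den_pow_le_exp {n : ℕ} {r : Fin n → ℕ} {ξ : Fin n → ℚ} {c : ℝ}
    (h : ∀ i, r i * Real.log (ξ i).den ≤ c) : ∏ i, ((ξ i).den : ℝ) ^ r i ≤ Real.exp (n * c) :=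
  calc ∏ i, ((ξ i).den : ℝ) ^ r i ≤ ∏ _i : Fin n, Real.exp c := prod_le_prod
        (fun _ _ => by positivity) fun i _ => by
          rw [← Real.exp_log (Nat.cast_pos.2 (ξ i).den_pos), ← Real.exp_nat_mul]
          exact Real.exp_le_exp.2 (h i)
    _ = Real.exp (n * c) := by
      rw [prod_const, card_univ, Fintype.card_fin, ← Real.exp_nat_mul]

lemma exists_forall_hasIndexGE_of_approx {m : ℕ} (hm : 0 < m) (α : ℝ) {ε : ℝ} (hε : 0 < ε)
    (hε1 : ε ≤ 1) {E : ℝ} (hE : 1 ≤ E) :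
    ∃ s, 0 < s ∧ ∀ {r : Fin m → ℕ} {ξ : Fin m → ℚ} {L : ℝ} {P : MvPolynomial (Fin m) ℤ},
      IsAdmissible s L r ξ → 1 ≤ s * L → (∀ h, |α - ξ h| ≤ ((ξ h).den : ℝ) ^ (-(2 + ε))) →
      (∀ h, r h * Real.log (ξ h).den ≤ (1 + ε / 20) * L) → (∀ h, degreeOf h P ≤ r h) →
      l1Norm P ≤ E ^ (∑ h, r h + 1) → HasIndexGE r (m * (1 / 2 - ε / 20)) (fun _ => α) P →
      HasIndexGE r (ε / 20) ξ P := by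
  have hα := abs_nonneg α
  have hm1 : (1 : ℝ) ≤ m := Nat.one_le_cast.2 hm
  have hF : 1 ≤ 8 * (1 + |α|) * E := one_le_mul_of_one_le_of_one_le (by linarith) hE
  obtain ⟨s, hs, hpow⟩ :=
    exists_forall_pow_sum_le_exp m hF (by positivity : 0 < ε * m / 20)
  refine ⟨s, hs, fun {r ξ L P} hadm hsL hξ hrξ hPr hPE hPα μ hμ => ?_⟩
  by_contra! hlt
  set T := m * (1 / 2 - ε / 20) - relWeight r μ with hT
  have coeff_le : |coeff μ (taylorAt (fun h => (ξ h : ℝ)) P)| ≤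
      Real.exp (ε * m / 20 * L) * Real.exp (-((2 + ε) * L) * T) := by
    refine (hPα.abs_coeff_taylorAt_le_pow hPr (by linarith) hPE
      (mul_nonneg (by linarith) hadm.scale_pos.le) (fun h => abs_sub_le_exp_of_le_den_rpow hε.le
        (hadm.degree_pos h) (hξ h) (hadm.scale_le h)) μ).trans ?_
    gcongr
    exact hpow hadm.degree_le hsL
  have one_le : 1 ≤ Real.exp (ε * m / 20 * L) * Real.exp (-((2 + ε) * L) * T) *
      Real.exp (m * ((1 + ε / 20) * L)) := by
    have hcast : (1 : ℝ) ≤ |((coeff μ (taylorAt ξ P) : ℚ) : ℝ)| * ∏ h, ((ξ h).den : ℝ) ^ r h := by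
      exact_mod_cast one_le_abs_coeff_taylorAt_mul hPr hμ
    rw [ratCast_coeff_taylorAt] at hcast
    exact hcast.trans (mul_le_mul coeff_le (prod_den_pow_le_exp hrξ) (by positivity)
      (by positivity))
  rw [← Real.exp_add, ← Real.exp_add, Real.one_le_exp_iff] at one_le
  have exponent_neg : ε * m / 20 - (2 + ε) * T + m * (1 + ε / 20) < 0 := by
    have : 0 < ε * m := by positivity
    nlinarith [mul_le_mul_of_nonneg_left hε1 this.le, mul_le_mul_of_nonneg_left hm1 hε.le,
      mul_le_mul_of_nonneg_left hε1 hε.le]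
  nlinarith [mul_neg_of_neg_of_pos exponent_neg hadm.scale_pos]

/-! ### Rational approximations with rapidly growing denominators -/

lemma exists_rapidly_growing {X : Type*} {s : Set X} {f : X → ℝ} (hf : ¬BddAbove (f '' s))
    (n : ℕ) (b : ℝ) {K : ℝ} (hK : 0 ≤ K) :
    ∃ x : Fin n → X, (∀ i, x i ∈ s ∧ b ≤ f (x i)) ∧ ∀ i j, i < j → K * f (x j) ≤ f (x i) := by
  induction n with
  | zero => exact ⟨Fin.elim0, fun i => i.elim0, fun i => i.elim0⟩
  | succ n ih =>
    obtain ⟨x, hx, hgap⟩ := ih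
    obtain ⟨_, ⟨y, hys, rfl⟩, hy⟩ := not_bddAbove_iff.1 hf (max b (K * ∑ i, |f (x i)|))
    rw [max_lt_iff] at hy
    refine ⟨Fin.cons y x, Fin.cases ⟨hys, hy.1.le⟩ hx, Fin.cases ?_ fun i => ?_⟩
    · refine Fin.cases (fun h => absurd h (lt_irrefl _)) fun j _ => ?_
      have : f (x j) ≤ ∑ i, |f (x i)| := (le_abs_self _).trans
        (single_le_sum (f := fun i => |f (x i)|) (fun _ _ => abs_nonneg _) (mem_univ j))
      exact (mul_le_mul_of_nonneg_left this hK).trans hy.2.le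
    · exact Fin.cases (fun h => absurd h (Fin.not_lt_zero _)) fun j h =>
        hgap i j (Fin.succ_lt_succ_iff.1 h)

lemma exists_isAdmissible {s : Set ℚ}
    (hs : ¬BddAbove ((fun ξ : ℚ => Real.log ξ.den) '' s)) (n : ℕ) {σ δ : ℝ} (hσ : 0 < σ)
    (hδ : 0 < δ) (hδ1 : δ ≤ 1) :
    ∃ (L : ℝ) (r : Fin n → ℕ) (ξ : Fin n → ℚ), IsAdmissible σ L r ξ ∧ 1 ≤ σ * L ∧
      (∀ h, ξ h ∈ s) ∧ ∀ h, r h * Real.log (ξ h).den ≤ (1 + δ) * L := by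
  obtain ⟨ξ, hξ, hgap⟩ := exists_rapidly_growing hs n (2 / σ) (by positivity : 0 ≤ 2 / σ)
  set w : Fin n → ℝ := fun h => Real.log (ξ h).den
  have w_ge (h : Fin n) : 2 ≤ σ * w h := by
    have := (hξ h).2
    rwa [div_le_iff₀' hσ] at this
  have w_pos (h : Fin n) : 0 < w h := pos_of_mul_pos_right (two_pos.trans_le (w_ge h)) hσ.le
  set L := (∑ h, w h) / δ + 1 / σ with hL
  have sum_nonneg : 0 ≤ (∑ h, w h) / δ := div_nonneg (sum_nonneg fun h _ => (w_pos h).le) hδ.le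
  have L_pos : 0 < L := by positivity
  have L_ge : 1 ≤ σ * L := by
    rw [← div_le_iff₀' hσ]
    linarith
  have w_le (h : Fin n) : w h ≤ δ * L := by
    refine (single_le_sum (fun h _ => (w_pos h).le) (mem_univ h)).trans ?_
    rw [← div_le_iff₀' hδ, hL]
    exact le_add_of_nonneg_right (by positivity)
  let r : Fin n → ℕ := fun h => ⌈L / w h⌉₊
  have r_ge (h : Fin n) : L ≤ r h * w h := (div_le_iff₀ (w_pos h)).1 (Nat.le_ceil _)
  have r_le (h : Fin n) : r h * w h ≤ (1 + δ) * L := by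
    have := mul_le_mul_of_nonneg_right (Nat.ceil_lt_add_one (div_pos L_pos (w_pos h)).le).le
      (w_pos h).le
    rw [add_mul, div_mul_cancel₀ _ (w_pos h).ne', one_mul] at this
    linarith [w_le h]
  have r_le_two (h : Fin n) : r h * w h ≤ 2 * L := (r_le h).trans (by gcongr; linarith)
  refine ⟨L, r, ξ, ⟨L_pos, fun h => Nat.ceil_pos.2 (div_pos L_pos (w_pos h)), fun {i j} hij => ?_,
    r_ge, fun h => ?_⟩, L_ge, fun h => (hξ h).1, r_le⟩
  · refine le_of_mul_le_mul_right ?_ (w_pos i)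
    calc (r i : ℝ) * w i ≤ 2 * (r j * w j) := (r_le_two i).trans (by linarith [r_ge j])
      _ = σ * r j * (2 / σ * w j) := by field_simp
      _ ≤ σ * r j * w i := by gcongr; exact hgap i j hij
  · refine le_of_mul_le_mul_right ?_ (w_pos h)
    calc (r h : ℝ) * w h ≤ 2 * L := r_le_two h
      _ ≤ σ * w h * L := by gcongr; exact w_ge h
      _ = σ * L * w h := by ring

lemma finite_setOf_ratHeight_le (B : ℝ) : {ξ : ℚ | (ratHeight ξ : ℝ) ≤ B}.Finite := by
  simpa only [Rat.mulHeight₁_eq_max, ratHeight] using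
    Northcott.finite_le (h := Height.mulHeight₁ (K := ℚ)) B

lemma ratHeight_le_of_abs_sub_le_one {α : ℝ} {ξ : ℚ} (hξ : |α - ξ| ≤ 1) :
    (ratHeight ξ : ℝ) ≤ (|α| + 1) * ξ.den := by
  have hden : (0 : ℝ) < ξ.den := Nat.cast_pos.2 ξ.den_pos
  have abs_le : |(ξ : ℝ)| ≤ |α| + 1 := by
    rw [abs_sub_comm] at hξ
    linarith [abs_sub_abs_le_abs_sub (ξ : ℝ) α]
  have num_eq : (ξ.num.natAbs : ℝ) = |(ξ : ℝ)| * ξ.den := by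
    rw [← abs_of_pos hden, ← abs_mul, Nat.cast_natAbs, Int.cast_abs]
    exact_mod_cast congr_arg abs (Rat.mul_den_eq_num ξ).symm
  rw [ratHeight, Nat.cast_max]
  exact max_le (num_eq.trans_le (by gcongr)) (le_mul_of_one_le_left hden.le (by simp))

lemma not_bddAbove_log_den_of_infinite {α : ℝ} {s : Set ℚ} (hs : s.Infinite)
    (hα : ∀ ξ ∈ s, |α - ξ| ≤ 1) : ¬BddAbove ((fun ξ : ℚ => Real.log ξ.den) '' s) := by
  rintro ⟨b, hb⟩
  refine hs ((finite_setOf_ratHeight_le ((|α| + 1) * Real.exp b)).subset fun ξ hξ => ?_)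
  refine (ratHeight_le_of_abs_sub_le_one (hα ξ hξ)).trans ?_
  gcongr
  exact (Real.log_le_iff_le_exp (Nat.cast_pos.2 ξ.den_pos)).1 (hb ⟨ξ, hξ, rfl⟩)

/-! ### Roth's theorem -/

lemma finite_setOf_abs_sub_le_den_rpow_of_le_one {α : ℝ} (hα : IsAlgebraic ℚ α) {ε : ℝ}
    (hε : 0 < ε) (hε1 : ε ≤ 1) : {ξ : ℚ | |α - ξ| ≤ (ξ.den : ℝ) ^ (-(2 + ε))}.Finite := by
  by_contra hinf
  have hδ : 0 < ε / 20 := by positivity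
  obtain ⟨m, E, hm, hE, hpoly⟩ := exists_auxiliary_polynomial hα hδ (by linarith)
  obtain ⟨σ, hσ, hroth⟩ := exists_rothLemma m hδ
  obtain ⟨s₁, hs₁, hindex⟩ := exists_forall_hasIndexGE_of_approx hm α hε hε1 hE
  obtain ⟨s₂, hs₂, hnorm⟩ := exists_forall_pow_sum_le_exp m hE hσ
  have hden : ¬BddAbove ((fun ξ : ℚ => Real.log ξ.den) '' _) :=
    not_bddAbove_log_den_of_infinite hinf fun ξ hξ => le_trans hξ
      (Real.rpow_le_one_of_one_le_of_nonpos (Nat.one_le_cast.2 ξ.den_pos) (by linarith))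
  obtain ⟨L, r, ξ, hadm, hL, hξ, hrξ⟩ := exists_isAdmissible hden m
    (lt_min hσ (lt_min hs₁ hs₂)) hδ (by linarith)
  have hL0 := hadm.scale_pos.le
  have le_s₁ : min σ (min s₁ s₂) ≤ s₁ := (min_le_right _ _).trans (min_le_left _ _)
  have le_s₂ : min σ (min s₁ s₂) ≤ s₂ := (min_le_right _ _).trans (min_le_right _ _)
  obtain ⟨P, hP0, hPr, hPE, hPα⟩ := hpoly r hadm.degree_pos
  refine hroth (hadm.mono (min_le_left _ _)) hP0 hPr
    (hPE.trans (hnorm (hadm.mono le_s₂).degree_le (hL.trans (by gcongr)))) ?_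
  exact hindex (hadm.mono le_s₁) (hL.trans (by gcongr)) hξ hrξ hPr hPE hPα

lemma finite_setOf_abs_sub_le_den_rpow {α : ℝ} (hα : IsAlgebraic ℚ α) {ε : ℝ} (hε : 0 < ε) :
    {ξ : ℚ | |α - ξ| ≤ (ξ.den : ℝ) ^ (-(2 + ε))}.Finite := by
  refine (finite_setOf_abs_sub_le_den_rpow_of_le_one hα (lt_min hε one_pos)
    (min_le_right ε 1)).subset fun ξ hξ => hξ.out.trans ?_
  exact Real.rpow_le_rpow_of_exponent_le (Nat.one_le_cast.2 ξ.den_pos)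
    (by linarith [min_le_left ε 1])

end

end Roth

/-- **Roth's theorem** over `ℚ` with `S` consisting of the archimedean place:
for every real number `α` algebraic over `ℚ` and every `ε > 0`, the set of
rational numbers `ξ` with `min {1, |α - ξ|} ≤ H(ξ) ^ (-(2+ε))` is finite. -/
theorem roth_rationals (α : ℝ) (hα : IsAlgebraic ℚ α) (ε : ℝ) (hε : 0 < ε) :
    {ξ : ℚ | min 1 |α - (ξ : ℝ)| ≤ (ratHeight ξ : ℝ) ^ (-(2 + ε) : ℝ)}.Finite := by
  refine ((Roth.finite_setOf_abs_sub_le_den_rpow hα hε).union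
    (Roth.finite_setOf_ratHeight_le 1)).subset fun ξ hξ => ?_
  refine or_iff_not_imp_right.2 fun hheight => ?_
  have hpow : (ratHeight ξ : ℝ) ^ (-(2 + ε)) < 1 :=
    Real.rpow_lt_one_of_one_lt_of_neg (not_le.1 hheight) (by linarith)
  calc |α - ξ| ≤ (ratHeight ξ : ℝ) ^ (-(2 + ε)) :=
        (min_le_iff.1 hξ).resolve_left (not_le.2 hpow)
    _ ≤ (ξ.den : ℝ) ^ (-(2 + ε)) := Real.rpow_le_rpow_of_nonpos (Nat.cast_pos.2 ξ.den_pos)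
      (Nat.cast_le.2 (le_max_right _ _)) (by linarith)
end

section
/- Let E be a real inner product space of dimension at least 2, let z, z', w ∈ E, and let ρ > 0 satisfy ρ ≤ ‖z − w‖ and ρ ≤ ‖z' − w‖. Then there exists a path γ : [0,1] → E that is Lipschitz with constant (π/2)·‖z − z'‖ (hence of length at most (π/2)·‖z − z'‖), with γ(0) = z, γ(1) = z', ‖γ(t) − w‖ ≥ ρ for all t ∈ [0,1], and such that every point of the path lies within distance ρ of the segment from z to z', i.e., for every t ∈ [0,1] there is s ∈ [0,1] with ‖γ(t) − (z + s·(z' − z))‖ ≤ ρ. (The path-construction claim proved inside the proof of Lemma 6.8.) -/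
open scoped Real

/-!
A plane through `w`, `z` and `z'`, which exists even if these are collinear since `E` has dimension
at least two, can be identified with `ℂ` so that `w` becomes `0` and the segment from `z` to `z'`
lies on a line `re = r` with `0 ≤ r`. Let `R = max r ρ`. The path follows this line outside the
disc of radius `R` and replaces the chord inside the disc by the shorter of the two arcs it cuts
off, parametrized proportionally to arc length. If the arc subtends the angle `2α`, arc and chord
have lengths `2Rα` and `2R sin α`, so Jordan's inequality `2 / π * α ≤ sin α` bounds the speed by
`π / 2`. The shift away from the line is at most `R - r ≤ ρ`, and the coordinate along the line is a
monotone function of the parameter, so the path stays over the segment.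
-/

/-- The projection of `s` to the interval `[-c, c]`, for `0 ≤ c`. -/
def clamp (c s : ℝ) : ℝ := max (-c) (min s c)

section Clamp

variable {c s : ℝ}

lemma clamp_of_abs_le (h : |s| ≤ c) : clamp c s = s := by
  obtain ⟨hl, hr⟩ := abs_le.1 h
  rw [clamp, min_eq_left hr, max_eq_right hl]

lemma clamp_of_le (hc : 0 ≤ c) (h : c ≤ s) : clamp c s = c := by
  rw [clamp, min_eq_right h, max_eq_right (by linarith)]

lemma clamp_of_le_neg (hc : 0 ≤ c) (h : s ≤ -c) : clamp c s = -c := by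
  rw [clamp, min_eq_left (by linarith), max_eq_left h]

lemma abs_clamp_le (hc : 0 ≤ c) (s : ℝ) : |clamp c s| ≤ c :=
  abs_le.2 ⟨le_max_left _ _, max_le (by linarith) (min_le_right _ _)⟩

lemma clamp_mono (c : ℝ) : Monotone (clamp c) := fun s t hst => by
  unfold clamp
  gcongr

lemma sub_clamp_mono (c : ℝ) : Monotone fun s => s - clamp c s := fun s t hst => by
  simp only [clamp]
  grind

end Clamp

lemma abs_sub_add_abs_sub_of_monotone {f g : ℝ → ℝ} (hf : Monotone f) (hg : Monotone g) (s t : ℝ) :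
    |f s - f t| + |g s - g t| = |f s + g s - (f t + g t)| := by
  rw [add_sub_add_comm, eq_comm, abs_add_eq_add_abs_iff]
  simp only [sub_nonneg, sub_nonpos]
  exact (le_total t s).imp (fun h => ⟨hf h, hg h⟩) (fun h => ⟨hf h, hg h⟩)

lemma norm_exp_mul_I_sub_exp_mul_I_le (φ ψ : ℝ) :
    ‖Complex.exp (φ * Complex.I) - Complex.exp (ψ * Complex.I)‖ ≤ |φ - ψ| := by
  have hfactor : Complex.exp (φ * Complex.I) - Complex.exp (ψ * Complex.I) =
      Complex.exp (ψ * Complex.I) * (Complex.exp (Complex.I * (φ - ψ : ℝ)) - 1) := by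
    rw [mul_sub, ← Complex.exp_add, mul_one]
    push_cast
    ring_nf
  rw [hfactor, norm_mul, Complex.norm_exp_ofReal_mul_I, one_mul]
  exact Real.norm_exp_I_mul_ofReal_sub_one_le

/-- The argument at time `s` of the moving point of `arcDetour R α`: the chord coordinate, cut off
at the half chord length `R * sin α`, is rescaled to the interval `[-α, α]`. For `α = 0` the chord
is a point and the factor `0 / 0 = 0` gives the angle `0`. -/
noncomputable def arcAngle (R α s : ℝ) : ℝ := α / (R * Real.sin α) * clamp (R * Real.sin α) s

/-- The line `re = R * cos α`, parametrized by its imaginary part, with its chord in the disc of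
radius `R` replaced by the arc of angles from `-α` to `α`. Past the ends of the chord the term
`s - clamp _ s` continues along the line. -/
noncomputable def arcDetour (R α s : ℝ) : ℂ :=
  R * Complex.exp (arcAngle R α s * Complex.I) + (s - clamp (R * Real.sin α) s : ℝ) * Complex.I

section ArcDetour

variable {R α : ℝ}

lemma arcDetour_re (R α s : ℝ) : (arcDetour R α s).re = R * Real.cos (arcAngle R α s) := by
  simp [arcDetour, Complex.exp_ofReal_mul_I_re]

lemma arcDetour_im (R α s : ℝ) : (arcDetour R α s).im =
    R * Real.sin (arcAngle R α s) + (s - clamp (R * Real.sin α) s) := by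
  simp [arcDetour, Complex.exp_ofReal_mul_I_im]

lemma mul_sin_nonneg_of_le_pi_div_two (hR : 0 ≤ R) (hα₀ : 0 ≤ α) (hα : α ≤ π / 2) :
    0 ≤ R * Real.sin α :=
  mul_nonneg hR (Real.sin_nonneg_of_nonneg_of_le_pi hα₀ (by linarith [Real.pi_pos]))

lemma div_mul_sin_mul_mul_sin (hR : 0 < R) (hα₀ : 0 ≤ α) (hα : α ≤ π / 2) :
    α / (R * Real.sin α) * (R * Real.sin α) = α := by
  refine div_mul_cancel_of_imp fun h => ?_
  have hsin : Real.sin α = 0 := (mul_eq_zero.1 h).resolve_left hR.ne'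
  exact (Real.sin_eq_zero_iff_of_lt_of_lt (by linarith [Real.pi_pos])
    (by linarith [Real.pi_pos])).1 hsin

lemma arcAngle_mono (hR : 0 ≤ R) (hα₀ : 0 ≤ α) (hα : α ≤ π / 2) : Monotone (arcAngle R α) :=
  (clamp_mono _).const_mul (div_nonneg hα₀ (mul_sin_nonneg_of_le_pi_div_two hR hα₀ hα))

lemma abs_arcAngle_le (hR : 0 < R) (hα₀ : 0 ≤ α) (hα : α ≤ π / 2) (s : ℝ) :
    |arcAngle R α s| ≤ α := by
  have hc := mul_sin_nonneg_of_le_pi_div_two hR.le hα₀ hα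
  calc |arcAngle R α s|
      = α / (R * Real.sin α) * |clamp (R * Real.sin α) s| := by
        rw [arcAngle, abs_mul, abs_of_nonneg (div_nonneg hα₀ hc)]
    _ ≤ α / (R * Real.sin α) * (R * Real.sin α) := by gcongr; exact abs_clamp_le hc s
    _ = α := div_mul_sin_mul_mul_sin hR hα₀ hα

lemma arcDetour_of_abs_le {s : ℝ} (hs : |s| ≤ R * Real.sin α) :
    arcDetour R α s = R * Complex.exp (arcAngle R α s * Complex.I) := by
  simp [arcDetour, clamp_of_abs_le hs]

lemma arcDetour_of_le_abs (hR : 0 < R) (hα₀ : 0 ≤ α) (hα : α ≤ π / 2) {s : ℝ}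
    (hs : R * Real.sin α ≤ |s|) : arcDetour R α s = ⟨R * Real.cos α, s⟩ := by
  have hc := mul_sin_nonneg_of_le_pi_div_two hR.le hα₀ hα
  have hangle := div_mul_sin_mul_mul_sin hR hα₀ hα
  rcases le_abs'.1 hs with h | h
  · apply Complex.ext <;>
      simp [arcDetour_re, arcDetour_im, arcAngle, clamp_of_le_neg hc h, hangle]
  · apply Complex.ext <;>
      simp [arcDetour_re, arcDetour_im, arcAngle, clamp_of_le hc h, hangle]

lemma norm_arcDetour_sub_le (hR : 0 ≤ R) (hα₀ : 0 ≤ α) (hα : α ≤ π / 2) (s t : ℝ) :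
    ‖arcDetour R α s - arcDetour R α t‖ ≤ π / 2 * |s - t| := by
  set c := R * Real.sin α with hc
  have hc₀ : 0 ≤ c := mul_sin_nonneg_of_le_pi_div_two hR hα₀ hα
  have hone : 1 ≤ π / 2 := by linarith [Real.pi_gt_three]
  have hspeed : R * (α / c) ≤ π / 2 := by
    rw [← mul_div_assoc]
    refine div_le_of_le_mul₀ hc₀ (by positivity) ?_
    calc R * α = π / 2 * (R * (2 / π * α)) := by field_simp
      _ ≤ π / 2 * c := by rw [hc]; gcongr; exact Real.mul_le_sin hα₀ hα
  have harc : |arcAngle R α s - arcAngle R α t| = α / c * |clamp c s - clamp c t| := by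
    rw [arcAngle, arcAngle, ← hc, ← mul_sub, abs_mul, abs_of_nonneg (div_nonneg hα₀ hc₀)]
  have hsplit : |clamp c s - clamp c t| + |(s - clamp c s) - (t - clamp c t)| = |s - t| := by
    simpa using abs_sub_add_abs_sub_of_monotone (clamp_mono c) (sub_clamp_mono c) s t
  calc ‖arcDetour R α s - arcDetour R α t‖
      = ‖R * (Complex.exp (arcAngle R α s * Complex.I) - Complex.exp (arcAngle R α t * Complex.I)) +
          ((s - clamp c s) - (t - clamp c t) : ℝ) * Complex.I‖ := by
        simp only [arcDetour, ← hc]; push_cast; ring_nf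
    _ ≤ R * |arcAngle R α s - arcAngle R α t| + |(s - clamp c s) - (t - clamp c t)| := by
        refine (norm_add_le _ _).trans (add_le_add ?_ ?_)
        · rw [norm_mul, Complex.norm_of_nonneg hR]
          gcongr
          exact norm_exp_mul_I_sub_exp_mul_I_le _ _
        · rw [norm_mul, Complex.norm_I, mul_one, Complex.norm_real, Real.norm_eq_abs]
    _ = R * (α / c) * |clamp c s - clamp c t| + 1 * |(s - clamp c s) - (t - clamp c t)| := by
        rw [harc]; ring
    _ ≤ π / 2 * |clamp c s - clamp c t| + π / 2 * |(s - clamp c s) - (t - clamp c t)| := by gcongr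
    _ = π / 2 * |s - t| := by rw [← mul_add, hsplit]

lemma le_norm_mk_mul_cos_iff (hR : 0 < R) (hsin : 0 ≤ R * Real.sin α) (s : ℝ) :
    R ≤ ‖(⟨R * Real.cos α, s⟩ : ℂ)‖ ↔ R * Real.sin α ≤ |s| := by
  have hsq : R ^ 2 = (R * Real.cos α) ^ 2 + (R * Real.sin α) ^ 2 := by
    linear_combination -R ^ 2 * Real.sin_sq_add_cos_sq α
  rw [Complex.norm_eq_sqrt_sq_add_sq, Real.le_sqrt' hR, hsq, add_le_add_iff_left, sq_le_sq,
    abs_of_nonneg hsin]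

lemma le_norm_arcDetour (hR : 0 < R) (hα₀ : 0 ≤ α) (hα : α ≤ π / 2) (s : ℝ) :
    R ≤ ‖arcDetour R α s‖ := by
  rcases le_total |s| (R * Real.sin α) with hs | hs
  · rw [arcDetour_of_abs_le hs, norm_mul, Complex.norm_exp_ofReal_mul_I, mul_one,
      Complex.norm_of_nonneg hR.le]
  · rw [arcDetour_of_le_abs hR hα₀ hα hs]
    exact (le_norm_mk_mul_cos_iff hR (mul_sin_nonneg_of_le_pi_div_two hR.le hα₀ hα) s).2 hs

lemma arcDetour_re_mem_Icc (hR : 0 < R) (hα₀ : 0 ≤ α) (hα : α ≤ π / 2) (s : ℝ) :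
    (arcDetour R α s).re ∈ Set.Icc (R * Real.cos α) R := by
  have hcos : Real.cos α ≤ Real.cos (arcAngle R α s) := by
    rw [← Real.cos_abs (arcAngle R α s)]
    exact Real.cos_le_cos_of_nonneg_of_le_pi (abs_nonneg _) (by linarith [Real.pi_pos])
      (abs_arcAngle_le hR hα₀ hα s)
  rw [arcDetour_re]
  exact ⟨by gcongr, mul_le_of_le_one_right hR.le (Real.cos_le_one _)⟩

lemma arcDetour_im_mono (hR : 0 < R) (hα₀ : 0 ≤ α) (hα : α ≤ π / 2) :
    Monotone fun s => (arcDetour R α s).im := by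
  have hangle (s : ℝ) : arcAngle R α s ∈ Set.Icc (-(π / 2)) (π / 2) :=
    abs_le.1 ((abs_arcAngle_le hR hα₀ hα s).trans hα)
  have hsin : Monotone fun s => Real.sin (arcAngle R α s) := fun s t hst =>
    Real.strictMonoOn_sin.monotoneOn (hangle s) (hangle t) (arcAngle_mono hR.le hα₀ hα hst)
  simp only [arcDetour_im]
  exact (hsin.const_mul hR.le).add (sub_clamp_mono _)

end ArcDetour

theorem exists_vertical_path_around_disc {r ρ a b : ℝ} (hr : 0 ≤ r) (hρ : 0 < ρ)
    (ha : ρ ≤ ‖(⟨r, a⟩ : ℂ)‖) (hb : ρ ≤ ‖(⟨r, b⟩ : ℂ)‖) :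
    ∃ γ : ℝ → ℂ, (∀ s t, ‖γ s - γ t‖ ≤ π / 2 * |s - t|) ∧ γ a = ⟨r, a⟩ ∧ γ b = ⟨r, b⟩ ∧
      (∀ s, ρ ≤ ‖γ s‖) ∧
      ∀ s ∈ Set.Icc a b, ∃ h ∈ Set.Icc a b, ‖γ s - ⟨r, h⟩‖ ≤ ρ := by
  set R := max r ρ
  have hR : 0 < R := lt_max_of_lt_right hρ
  obtain ⟨α, hα₀, hα, hcos⟩ : ∃ α, 0 ≤ α ∧ α ≤ π / 2 ∧ R * Real.cos α = r := by
    have hratio : 0 ≤ r / R := by positivity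
    refine ⟨Real.arccos (r / R), Real.arccos_nonneg _, Real.arccos_le_pi_div_two.2 hratio, ?_⟩
    rw [Real.cos_arccos (by linarith) ((div_le_one hR).2 (le_max_left _ _)),
      mul_div_cancel₀ _ hR.ne']
  have hend {s : ℝ} (hs : ρ ≤ ‖(⟨r, s⟩ : ℂ)‖) : arcDetour R α s = ⟨r, s⟩ := by
    have hRs : R ≤ ‖(⟨r, s⟩ : ℂ)‖ :=
      max_le (Complex.re_le_norm ⟨r, s⟩) hs
    rw [← hcos] at hRs ⊢
    exact arcDetour_of_le_abs hR hα₀ hα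
      ((le_norm_mk_mul_cos_iff hR (mul_sin_nonneg_of_le_pi_div_two hR.le hα₀ hα) s).1 hRs)
  refine ⟨arcDetour R α, norm_arcDetour_sub_le hR.le hα₀ hα, hend ha, hend hb,
    fun s => (le_max_right _ _).trans (le_norm_arcDetour hR hα₀ hα s),
    fun s hs => ⟨(arcDetour R α s).im, ?_, ?_⟩⟩
  · simpa [hend ha, hend hb] using (arcDetour_im_mono hR hα₀ hα).mapsTo_Icc hs
  · obtain ⟨hre_ge, hre_le⟩ := arcDetour_re_mem_Icc hR hα₀ hα s
    have hshift : arcDetour R α s - ⟨r, (arcDetour R α s).im⟩ = ((arcDetour R α s).re - r : ℝ) := by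
      apply Complex.ext <;> simp
    have hRr : R ≤ r + ρ := max_le (by linarith) (by linarith)
    rw [hshift, Complex.norm_of_nonneg (by linarith)]
    linarith

theorem exists_path_around_disc_of_re_eq {ρ : ℝ} {p q : ℂ} (hp_re : 0 ≤ p.re) (hre : q.re = p.re)
    (him : p.im ≤ q.im) (hρ : 0 < ρ) (hp : ρ ≤ ‖p‖) (hq : ρ ≤ ‖q‖) :
    ∃ γ : ℝ → ℂ, (∀ t t', ‖γ t - γ t'‖ ≤ π / 2 * ‖p - q‖ * |t - t'|) ∧ γ 0 = p ∧ γ 1 = q ∧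
      (∀ t, ρ ≤ ‖γ t‖) ∧
      ∀ t ∈ Set.Icc (0 : ℝ) 1, ∃ s ∈ Set.Icc (0 : ℝ) 1, ‖γ t - (p + s • (q - p))‖ ≤ ρ := by
  have hq_eq : ⟨p.re, q.im⟩ = q := Complex.ext hre.symm rfl
  obtain ⟨γ, hlip, hγp, hγq, hfar, hnear⟩ :=
    exists_vertical_path_around_disc (a := p.im) (b := q.im) hp_re hρ hp (by rwa [hq_eq])
  let height : ℝ →ᵃ[ℝ] ℝ := AffineMap.lineMap p.im q.im
  have himage : height '' Set.Icc (0 : ℝ) 1 = Set.Icc p.im q.im := by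
    rw [← segment_eq_image_lineMap ℝ, segment_eq_Icc him]
  refine ⟨γ ∘ height, fun t t' => ?_, by simp [height, hγp], by simp [height, hγq, hq_eq],
    fun t => hfar _, fun t ht => ?_⟩
  · calc ‖γ (height t) - γ (height t')‖ ≤ π / 2 * dist (height t) (height t') := hlip _ _
      _ = π / 2 * ‖p - q‖ * |t - t'| := by
        rw [dist_lineMap_lineMap, ← Complex.dist_of_re_eq hre.symm, Complex.dist_eq, Real.dist_eq]
        ring
  · obtain ⟨h, hh, hle⟩ := hnear _ (himage ▸ Set.mem_image_of_mem _ ht)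
    obtain ⟨s, hs, rfl⟩ := himage.symm ▸ hh
    have hpoint : ⟨p.re, height s⟩ = p + s • (q - p) := by
      apply Complex.ext <;> simp [height, AffineMap.lineMap_apply, hre, add_comm]
    exact ⟨s, hs, hpoint ▸ hle⟩

lemma exists_norm_eq_one_norm_smul_eq {E : Type*} [NormedAddCommGroup E] [NormedSpace ℝ E]
    [Nontrivial E] (x : E) : ∃ u : E, ‖u‖ = 1 ∧ ‖x‖ • u = x := by
  rcases eq_or_ne x 0 with rfl | hx
  · obtain ⟨u, hu⟩ := exists_norm_eq E zero_le_one
    exact ⟨u, hu, by simp⟩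
  · exact ⟨NormedSpace.normalize x, NormedSpace.norm_normalize hx,
      NormedSpace.norm_smul_normalize x⟩

section InnerProductSpace

variable {E : Type*} [NormedAddCommGroup E]

lemma nontrivial_orthogonal_of_rank_lt {𝕜 : Type*} [RCLike 𝕜] [InnerProductSpace 𝕜 E]
    {K : Submodule 𝕜 E} [K.HasOrthogonalProjection] (hK : Module.rank 𝕜 K < Module.rank 𝕜 E) :
    Nontrivial Kᗮ := by
  rw [Submodule.nontrivial_iff_ne_bot, ne_eq, Submodule.orthogonal_eq_bot_iff]
  rintro rfl
  exact hK.ne (rank_top 𝕜 E)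

variable [InnerProductSpace ℝ E]

lemma exists_linearIsometry_complex {u v : E} (huv : Orthonormal ℝ ![u, v]) :
    ∃ ι : ℂ →ₗᵢ[ℝ] E, ∀ z, ι z = z.re • u + z.im • v := by
  set f := Complex.basisOneI.constr ℝ ![u, v]
  have hbasis : f ∘ Complex.orthonormalBasisOneI.toBasis = ![u, v] := by
    ext i
    fin_cases i <;> simp [f]
  refine ⟨f.isometryOfOrthonormal (v := Complex.orthonormalBasisOneI.toBasis) (by simp)
    (by rwa [hbasis]), fun z => by simp [f]⟩

lemma exists_linearIsometry_complex_map_eq (hdim : 2 ≤ Module.rank ℝ E) (x y : E) :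
    ∃ (ι : ℂ →ₗᵢ[ℝ] E) (p q : ℂ), 0 ≤ p.re ∧ q.re = p.re ∧ p.im ≤ q.im ∧ ι p = x ∧ ι q = y := by
  have : Nontrivial E := rank_pos_iff_nontrivial.1 (zero_lt_two.trans_le hdim)
  obtain ⟨v, hv, hxy⟩ := exists_norm_eq_one_norm_smul_eq (y - x)
  have hrank : Module.rank ℝ (ℝ ∙ v) < Module.rank ℝ E :=
    calc Module.rank ℝ (ℝ ∙ v) ≤ 1 := (rank_span_le _).trans_eq (Cardinal.mk_singleton v)
      _ < 2 := Cardinal.one_lt_two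
      _ ≤ Module.rank ℝ E := hdim
  have : Nontrivial (ℝ ∙ v)ᗮ := nontrivial_orthogonal_of_rank_lt hrank
  obtain ⟨u, hu, hxu⟩ := exists_norm_eq_one_norm_smul_eq ((ℝ ∙ v)ᗮ.orthogonalProjectionOnto x)
  obtain ⟨ι, hι⟩ := exists_linearIsometry_complex (u := (u : E)) (v := v) <| by
    have huv : inner ℝ (u : E) v = 0 := Submodule.mem_orthogonal_singleton_iff_inner_left.1 u.2
    have hnorm : ‖(u : E)‖ = 1 := hu
    simp [orthonormal_vecCons_iff, hnorm, hv, huv]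
  set r := ‖(ℝ ∙ v)ᗮ.orthogonalProjectionOnto x‖
  set a := inner ℝ v x
  have hx : r • (u : E) + a • v = x :=
    calc r • (u : E) + a • v
        = (ℝ ∙ v)ᗮ.starProjection x + (ℝ ∙ v).starProjection x := by
          rw [Submodule.starProjection_unit_singleton ℝ hv x]
          exact congrArg (· + a • v) (congrArg Subtype.val hxu)
      _ = x := by rw [add_comm, Submodule.starProjection_add_starProjection_orthogonal]
  refine ⟨ι, ⟨r, a⟩, ⟨r, a + ‖y - x‖⟩, norm_nonneg _, rfl, by simp, by rw [hι, hx], ?_⟩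
  rw [hι, add_smul, ← add_assoc, hx, hxy, add_sub_cancel]

end InnerProductSpace

/-- The path-construction claim from the proof of Lemma 6.8: in a real inner
product space of dimension at least 2, given `z, z', w` and `ρ > 0` with
`ρ ≤ ‖z − w‖` and `ρ ≤ ‖z' − w‖`, there is a path `γ : [0,1] → E` from `z` to
`z'`, Lipschitz with constant `(π/2)·‖z − z'‖` (hence of length at most
`(π/2)·‖z − z'‖`), staying at distance at least `ρ` from `w`, and such that
every point of the path lies within distance `ρ` of the segment from `z` to
`z'`. -/
theorem path_around_ball {E : Type*} [NormedAddCommGroup E] [InnerProductSpace ℝ E]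
    (hdim : 2 ≤ Module.rank ℝ E) (z z' w : E) (ρ : ℝ) (hρ : 0 < ρ)
    (hz : ρ ≤ ‖z - w‖) (hz' : ρ ≤ ‖z' - w‖) :
    ∃ γ : ℝ → E,
      (∀ t ∈ Set.Icc (0 : ℝ) 1, ∀ t' ∈ Set.Icc (0 : ℝ) 1,
        ‖γ t - γ t'‖ ≤ π / 2 * ‖z - z'‖ * |t - t'|) ∧
      γ 0 = z ∧ γ 1 = z' ∧
      (∀ t ∈ Set.Icc (0 : ℝ) 1, ρ ≤ ‖γ t - w‖) ∧
      (∀ t ∈ Set.Icc (0 : ℝ) 1, ∃ s ∈ Set.Icc (0 : ℝ) 1,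
        ‖γ t - (z + s • (z' - z))‖ ≤ ρ) := by
  obtain ⟨ι, p, q, hp_re, hre, him, hιp, hιq⟩ :=
    exists_linearIsometry_complex_map_eq hdim (z - w) (z' - w)
  obtain ⟨γ, hlip, hγp, hγq, hfar, hnear⟩ := exists_path_around_disc_of_re_eq hp_re hre him hρ
    (by rwa [← ι.norm_map, hιp]) (by rwa [← ι.norm_map, hιq])
  have hpq : ‖p - q‖ = ‖z - z'‖ := by
    rw [← ι.norm_map, map_sub, hιp, hιq, sub_sub_sub_cancel_right]
  refine ⟨fun t => w + ι (γ t), fun t _ t' _ => ?_, by simp [hγp, hιp], by simp [hγq, hιq],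
    fun t _ => by simpa using hfar t, fun t ht => ?_⟩
  · rw [add_sub_add_left_eq_sub, ← map_sub, ι.norm_map, ← hpq]
    exact hlip t t'
  · obtain ⟨s, hs, hle⟩ := hnear t ht
    have hsegment : w + ι (p + s • (q - p)) = z + s • (z' - z) := by
      simp only [map_add, map_smul, map_sub, hιp, hιq]
      module
    refine ⟨s, hs, ?_⟩
    rwa [← hsegment, add_sub_add_left_eq_sub, ← map_sub, ι.norm_map]
end

section
/- Let d ≥ 1 be an integer, let r₀ ∈ (0,1], and let c, c' ≥ 0. Then for every ε > 0 there exists δ > 0 such that for every w ∈ ℂ^d and every Lebesgue-measurable set T ⊆ ℂ^d of Lebesgue measure at most δ, one has ∫_T ( c + c'·(−log min{r₀, |w − z|}) ) / ( min{r₀, |w − z|} )^{2d−2} dμ(z) ≤ ε. (Claim (7.5.5) proved inside the proof of Lemma 7.5: uniform absolute continuity of the integrals of the translated kernel.) -/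
open MeasureTheory

/-!
In polar coordinates a radial kernel with profile `k` is integrable on the ball of radius `r` iff
`y ^ (dim - 1) • k y` is integrable on `(0, r)`. For `k y = (c - c' log y) / y ^ (2d - 2)` on
`ℝ^{2d}` the weight leaves `y * (c - c' log y)`, and `log` is integrable at `0`. The truncated
kernel is constant off the ball, so its integral over a set tends to zero with the measure of the
set. The bound is uniform in `w` because `z ↦ w - z` preserves Lebesgue measure.
-/

open Filter Set Topology Module
open scoped ENNReal

theorem hasBasis_nhds_zero_Iic_ofReal :
    (𝓝 (0 : ℝ≥0∞)).HasBasis (fun δ : ℝ ↦ 0 < δ) fun δ ↦ Iic (ENNReal.ofReal δ) := by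
  refine ENNReal.nhds_zero_basis_Iic.to_hasBasis (fun a ha ↦ ?_) fun δ hδ ↦
    ⟨ENNReal.ofReal δ, ENNReal.ofReal_pos.2 hδ, Subset.rfl⟩
  obtain ⟨δ, -, hδ, hδa⟩ := ENNReal.lt_iff_exists_real_btwn.1 ha
  exact ⟨δ, ENNReal.ofReal_pos.1 hδ, Iic_subset_Iic.2 hδa.le⟩

theorem tendsto_setLIntegral_of_bounded_compl {α : Type*} [MeasurableSpace α] {μ : Measure α}
    {f : α → ℝ≥0∞} {A : Set α} {M : ℝ≥0∞} (hfA : ∫⁻ x in A, f x ∂μ ≠ ∞) (hM : M ≠ ∞)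
    (hfM : ∀ x ∉ A, f x ≤ M) :
    Tendsto (fun s ↦ ∫⁻ x in s, f x ∂μ) (comap μ (𝓝 0)) (𝓝 0) := by
  have hμ : Tendsto μ (comap μ (𝓝 0)) (𝓝 0) := tendsto_comap
  have hle : ∀ x, f x ≤ A.indicator f x + M := fun x ↦ by
    by_cases hx : x ∈ A
    · simp [hx]
    · simpa [hx] using hfM x hx
  have hA : Tendsto (fun s ↦ ∫⁻ x in s, A.indicator f x ∂μ) (comap μ (𝓝 0)) (𝓝 0) :=
    tendsto_setLIntegral_zero (ne_top_of_le_ne_top hfA (lintegral_indicator_le f A)) hμ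
  have hadd : Tendsto (fun s ↦ ∫⁻ x in s, A.indicator f x ∂μ + M * μ s) (comap μ (𝓝 0)) (𝓝 0) := by
    simpa using hA.add (ENNReal.Tendsto.const_mul hμ (.inr hM))
  refine tendsto_of_tendsto_of_tendsto_of_le_of_le tendsto_const_nhds hadd (fun _ ↦ zero_le) ?_
  intro s
  calc ∫⁻ x in s, f x ∂μ ≤ ∫⁻ x in s, A.indicator f x + M ∂μ := lintegral_mono hle
    _ = ∫⁻ x in s, A.indicator f x ∂μ + M * μ s := by
      rw [lintegral_add_right _ measurable_const, setLIntegral_const]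

theorem tendsto_setLIntegral_sub_left {G : Type*} [AddGroup G] [MeasurableSpace G]
    [MeasurableAdd G] [MeasurableNeg G] {μ : Measure G} [μ.IsAddLeftInvariant] [μ.IsNegInvariant]
    {f : G → ℝ≥0∞} (hf : Tendsto (fun s ↦ ∫⁻ x in s, f x ∂μ) (comap μ (𝓝 0)) (𝓝 0)) :
    Tendsto (fun p : G × Set G ↦ ∫⁻ z in p.2, f (p.1 - z) ∂μ)
      (comap (fun p ↦ μ p.2) (𝓝 0)) (𝓝 0) := by
  have hpres (w : G) : MeasurePreserving (w - ·) μ μ := Measure.measurePreserving_sub_left μ w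
  have hemb (w : G) : MeasurableEmbedding (w - ·) := measurableEmbedding_subLeft w
  have hμ (p : G × Set G) : μ ((p.1 - ·) '' p.2) = μ p.2 := by
    rw [← (hpres p.1).measure_preimage_emb (hemb p.1), preimage_image_eq _ (hemb p.1).injective]
  have himage : Tendsto (fun p : G × Set G ↦ (p.1 - ·) '' p.2)
      (comap (fun p ↦ μ p.2) (𝓝 0)) (comap μ (𝓝 0)) :=
    tendsto_comap_iff.2 (tendsto_comap.congr fun p ↦ (hμ p).symm)
  exact (hf.comp himage).congr fun p ↦ ((hpres p.1).setLIntegral_comp_emb (hemb p.1) f p.2).symm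

theorem integrableOn_pow_smul_log_div_pow {m n : ℕ} (hnm : n ≤ m) (c c' r : ℝ) :
    IntegrableOn (fun y ↦ y ^ m • ((c + c' * (-Real.log y)) / y ^ n)) (Ioo 0 r) := by
  have hlog : IntervalIntegrable (fun y ↦ c + c' * (-Real.log y)) volume 0 r :=
    intervalIntegrable_const.add (intervalIntegral.intervalIntegrable_log'.neg.const_mul c')
  have hprod := hlog.continuousOn_mul (continuous_pow (m - n)).continuousOn
  refine (hprod.1.mono_set Ioo_subset_Ioc_self).congr_fun (fun y hy ↦ ?_) measurableSet_Ioo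
  simp only [smul_eq_mul, pow_sub₀ y hy.1.ne' hnm]
  ring

theorem uniform_absolute_continuity_general {E F : Type*} [NormedAddCommGroup E] [NormedSpace ℝ E]
    [FiniteDimensional ℝ E] [Nontrivial E] [MeasurableSpace E] [BorelSpace E]
    [NormedAddCommGroup F] [NormedSpace ℝ F] (μ : Measure E) [μ.IsAddHaarMeasure]
    {k : ℝ → F} {r : ℝ} (hk : IntegrableOn (fun y ↦ y ^ (finrank ℝ E - 1) • k y) (Ioo 0 r)) :
    ∀ ε > (0 : ℝ), ∃ δ > (0 : ℝ), ∀ (w : E) (T : Set E), μ T ≤ ENNReal.ofReal δ →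
      ∫⁻ z in T, ‖k (min r ‖w - z‖)‖ₑ ∂μ ≤ ENNReal.ofReal ε := by
  have hball : IntegrableOn (fun x : E ↦ k (min r ‖x‖)) (Metric.ball 0 r) μ := by
    refine ((integrableOn_fun_norm_addHaar μ).2 hk).congr_fun (fun x hx ↦ ?_) measurableSet_ball
    simp only [min_eq_right (mem_ball_zero_iff.1 hx).le]
  have hcompl : ∀ x ∉ Metric.ball (0 : E) r, ‖k (min r ‖x‖)‖ₑ ≤ ‖k r‖ₑ := fun x hx ↦ by
    rw [min_eq_left (by simpa using hx)]
  have htendsto := tendsto_setLIntegral_sub_left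
    (tendsto_setLIntegral_of_bounded_compl hball.hasFiniteIntegral.ne enorm_ne_top hcompl)
  intro ε hε
  obtain ⟨δ, hδ, h⟩ := ((hasBasis_nhds_zero_Iic_ofReal.comap _).tendsto_iff
    hasBasis_nhds_zero_Iic_ofReal).1 htendsto ε hε
  exact ⟨δ, hδ, fun w T hT ↦ h (w, T) hT⟩

/-- Claim (7.5.5) from the proof of Lemma 7.5 (uniform absolute continuity of
the integrals of the translated kernel), with `ℂ^d` identified with `ℝ^{2d}`:
for `d ≥ 1`, `r₀ ∈ (0,1]` and `c, c' ≥ 0`, for every `ε > 0` there is `δ > 0`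
such that for every `w` and every measurable set `T` of Lebesgue measure at
most `δ`,
`∫_T (c + c'·(−log min {r₀, |w − z|})) / (min {r₀, |w − z|})^{2d−2} dμ(z) ≤ ε`. -/
theorem uniform_absolute_continuity (d : ℕ) (hd : 1 ≤ d)
    (r₀ : ℝ) (hr₀ : 0 < r₀) (hr₀' : r₀ ≤ 1) (c c' : ℝ) (hc : 0 ≤ c) (hc' : 0 ≤ c') :
    ∀ ε > (0 : ℝ), ∃ δ > (0 : ℝ),
      ∀ (w : EuclideanSpace ℝ (Fin (2 * d))) (T : Set (EuclideanSpace ℝ (Fin (2 * d)))),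
        MeasurableSet T → volume T ≤ ENNReal.ofReal δ →
        ∫⁻ z in T, ENNReal.ofReal
            ((c + c' * (-Real.log (min r₀ ‖w - z‖))) / (min r₀ ‖w - z‖) ^ (2 * d - 2))
          ∂volume ≤ ENNReal.ofReal ε := by
  intro ε hε
  have : NeZero (2 * d) := ⟨by omega⟩
  obtain ⟨δ, hδ, h⟩ := uniform_absolute_continuity_general
    (volume : Measure (EuclideanSpace ℝ (Fin (2 * d))))
    (integrableOn_pow_smul_log_div_pow (n := 2 * d - 2)
      (by rw [finrank_euclideanSpace_fin]; omega) c c' r₀) ε hε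
  exact ⟨δ, hδ, fun w T _ hT ↦ (lintegral_mono fun _ ↦ Real.ofReal_le_enorm _).trans (h w T hT)⟩
end
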